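/- For every S ∈ Λ_e and every β in the basic interval I^S = [β_ℓ^S, β_*^S], the critical value is τ(β) = (S^− L(S)^∞)_β. -/

import Mathlib

open Set Filter MeasureTheory Topology

noncomputable section

/-- The β-transformation `x ↦ βx - ⌊βx⌋`. -/
def Tbeta (β x : ℝ) : ℝ := Int.fract (β * x)

/-- The survivor set `K_β(t)`: points of `[0,1)` whose orbit never enters `[0,t)`. -/
def survivor (β t : ℝ) : Set ℝ :=
  {x | x ∈ Set.Ico (0 : ℝ) 1 ∧ ∀ n : ℕ, t ≤ (Tbeta β)^[n] x}

/-- The set-valued bifurcation set `E_β`. -/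
def Ebif (β : ℝ) : Set ℝ :=
  {t | t ∈ Set.Ico (0 : ℝ) 1 ∧ ∀ t' : ℝ, t < t' → survivor β t' ≠ survivor β t}

/-- `(c)_β = Σ_{i≥1} c_i β^{-i}` for an infinite digit sequence (indexed from `0`). -/
def valSeq (β : ℝ) (c : ℕ → ℕ) : ℝ := ∑' i : ℕ, (c i : ℝ) / β ^ (i + 1)

/-- `(w 0^∞)_β` for a finite word `w`. -/
def valWord (β : ℝ) (w : List ℕ) : ℝ :=
  ∑ i ∈ Finset.range w.length, (w.getD i 0 : ℝ) / β ^ (i + 1)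

/-- `w⁺`: increment the last letter of `w`. -/
def wplus (w : List ℕ) : List ℕ := w.dropLast ++ [w.getLast! + 1]

/-- `w⁻`: decrement the last letter of `w`. -/
def wminus (w : List ℕ) : List ℕ := w.dropLast ++ [w.getLast! - 1]

/-- `θ`: increment every digit of `w` by one. -/
def theta (w : List ℕ) : List ℕ := w.map (· + 1)

/-- `L(w)`: the lexicographically largest cyclic permutation of `w`. -/
def maxCyc (w : List ℕ) : List ℕ := ((List.range w.length).map w.rotate).foldl max []

/-- `w^∞`: the periodic sequence with period block `w`. -/
def perSeq (w : List ℕ) : ℕ → ℕ := fun i => w.getD (i % w.length) 0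

/-- The sequence given by the word `w` followed by the sequence `c`. -/
def wordSeq (w : List ℕ) (c : ℕ → ℕ) : ℕ → ℕ :=
  fun i => if i < w.length then w.getD i 0 else c (i - w.length)

/-- Strict lexicographic order `≺` on sequences. -/
def seqLt (x y : ℕ → ℕ) : Prop := ∃ n, (∀ i < n, x i = y i) ∧ x n < y n

/-- Lexicographic order `≼` on sequences. -/
def seqLe (x y : ℕ → ℕ) : Prop := x = y ∨ seqLt x y

/-- The `n`-fold left shift `σⁿ` on sequences. -/
def shiftn (n : ℕ) (x : ℕ → ℕ) : ℕ → ℕ := fun i => x (i + n)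

/-- One step of the Farey recursion: insert the concatenation `w_i w_{i+1}`
between consecutive entries. -/
def fareyInsert : List (List ℕ) → List (List ℕ)
  | [] => []
  | [w] => [w]
  | w :: v :: rest => w :: (w ++ v) :: fareyInsert (v :: rest)

/-- The ordered set `F_n` of Farey words of level `n`. -/
def fareyLevel : ℕ → List (List ℕ)
  | 0 => [[0], [1]]
  | n + 1 => fareyInsert (fareyLevel n)

/-- `F`: all Farey words of length at least two. -/
def FareySet : Set (List ℕ) := {w | (∃ n, w ∈ fareyLevel n) ∧ w ≠ [0] ∧ w ≠ [1]}

/-- `F̂ = F ∪ {1}`. -/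
def FareyHat : Set (List ℕ) := FareySet ∪ {[1]}

/-- The extended Farey set `F_e = {θ^k(w) : w ∈ F̂, k ≥ 0}`. -/
def FareyExt : Set (List ℕ) := {w | ∃ v ∈ FareyHat, ∃ k : ℕ, w = theta^[k] v}

/-- A nonempty word is Lyndon iff it is strictly smaller than each of its nontrivial
cyclic rotations (equivalently: aperiodic and lexicographically smallest among its
cyclic permutations). -/
def IsLyndon (w : List ℕ) : Prop := w ≠ [] ∧ ∀ i, 0 < i → i < w.length → w < w.rotate i

/-- `L_e`: all Lyndon words over `ℕ ∪ {0}` except the single-letter word `0`. -/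
def LyndonExt : Set (List ℕ) := {w | IsLyndon w ∧ w ≠ [0]}

/-- `L`: Lyndon words over `{0,1}` of length at least `2`. -/
def LyndonBin : Set (List ℕ) := {w | IsLyndon w ∧ 2 ≤ w.length ∧ ∀ d ∈ w, d ≤ 1}

/-- The block of `Φ_s` emitted for current digit `d` after previous digit `p`:
`L(s)` for `00`, `s⁻` for `10`, `L(s)⁺` for `01`, `s` for `11`. -/
def phiBlock (s : List ℕ) (p d : ℕ) : List ℕ :=
  if d = 0 then (if p = 0 then maxCyc s else wminus s)
  else (if p = 0 then wplus (maxCyc s) else s)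

def phiAux (s : List ℕ) : ℕ → List ℕ → List ℕ
  | _, [] => []
  | p, d :: rest => phiBlock s p d ++ phiAux s d rest

/-- The substitution `Φ_s` on finite words; `s • r = subst s r`.  An initial digit `0`
produces `s⁻`, an initial digit `1` produces `L(s)⁺`, and thereafter runs
`0^k` resp. `1^l` produce `L(s)^{k-1}` resp. `s^{l-1}`, in accordance with
`Φ_s(0^{k₁}1^{l₁}…) = s⁻ L(s)^{k₁-1} L(s)⁺ s^{l₁-1} …` and
`Φ_s(1^{k₁}0^{l₁}…) = L(s)⁺ s^{k₁-1} s⁻ L(s)^{l₁-1} …`. -/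
def subst (s r : List ℕ) : List ℕ :=
  match r with
  | [] => []
  | d :: rest => phiBlock s (1 - d) d ++ phiAux s d rest

/-- The substitution `Φ_s` on infinite sequences, as the limit of its values
on initial segments (each digit contributes a nonempty block, so the `i`-th letter
is determined by the first `i+1` digits). -/
def phiSeq (s : List ℕ) (c : ℕ → ℕ) : ℕ → ℕ :=
  fun i => (subst s (List.ofFn fun j : Fin (i + 1) => c j)).getD i 0

/-- `Λ_e(m) = {s₁ • s₂ • … • s_m : s₁ ∈ F_e, s₂,…,s_m ∈ F}`. -/
def LambdaE (m : ℕ) : Set (List ℕ) :=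
  {w | ∃ s₁ ∈ FareyExt, ∃ rs : List (List ℕ),
    rs.length = m - 1 ∧ (∀ r ∈ rs, r ∈ FareySet) ∧ w = rs.foldl subst s₁}

/-- `Λ_e = ∪_{m≥1} Λ_e(m)`. -/
def LambdaExt : Set (List ℕ) := ⋃ m ∈ Set.Ici 1, LambdaE m

/-- `β_ℓ^S`: the base `β > 1` with `(L(S)^∞)_β = 1` (it is unique since
`β ↦ (c)_β` is strictly decreasing). -/
def betaL (S : List ℕ) : ℝ :=
  Classical.epsilon fun β : ℝ => 1 < β ∧ valSeq β (perSeq (maxCyc S)) = 1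

/-- `β_*^S`: the base `β > 1` with `(L(S)⁺ S⁻ L(S)^∞)_β = 1`. -/
def betaStar (S : List ℕ) : ℝ :=
  Classical.epsilon fun β : ℝ =>
    1 < β ∧ valSeq β (wordSeq (wplus (maxCyc S) ++ wminus S) (perSeq (maxCyc S))) = 1

/-- `β_r^S`: the base `β > 1` with `(L(S)⁺ S^∞)_β = 1`. -/
def betaR (S : List ℕ) : ℝ :=
  Classical.epsilon fun β : ℝ => 1 < β ∧ valSeq β (wordSeq (wplus (maxCyc S)) (perSeq S)) = 1

/-- The Lyndon/Farey interval `J^S = [β_ℓ^S, β_r^S]`. -/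
def Jint (S : List ℕ) : Set ℝ := Set.Icc (betaL S) (betaR S)

/-- The basic interval `I^S = [β_ℓ^S, β_*^S]`. -/
def Iint (S : List ℕ) : Set ℝ := Set.Icc (betaL S) (betaStar S)

/-- The exceptional set `E = (1,∞) ∖ ∪_{s ∈ F_e} J^s`. -/
def Eexc : Set ℝ := Set.Ioi 1 \ ⋃ s ∈ FareyExt, Jint s

/-- The relative exceptional set `E^S = (J^S ∖ I^S) ∖ ∪_{r ∈ F} J^{S•r}`. -/
def EexcRel (S : List ℕ) : Set ℝ :=
  (Jint S \ Iint S) \ ⋃ r ∈ FareySet, Jint (subst S r)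

/-- The infinitely renormalizable set `E_∞ = ∩_{m≥1} ∪_{S ∈ Λ_e(m)} J^S`. -/
def Einf : Set ℝ := ⋂ m ∈ Set.Ici 1, ⋃ S ∈ LambdaE m, Jint S

/-- `E_L = E ∪ {β_ℓ^s : s ∈ F_e}`. -/
def EL : Set ℝ := Eexc ∪ {x | ∃ s ∈ FareyExt, x = betaL s}

/-- The critical value `τ(β) = min{t > 0 : dim_H K_β(t) = 0}`. -/
def tau (β : ℝ) : ℝ := sInf {t : ℝ | 0 < t ∧ dimH (survivor β t) = 0}

end

/-! ### Lexicographic order on sequences -/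

theorem seqLe.refl (x : ℕ → ℕ) : seqLe x x := Or.inl rfl

theorem seqLt.le {x y : ℕ → ℕ} (h : seqLt x y) : seqLe x y := Or.inr h

theorem seqLt.trans {x y z : ℕ → ℕ} (h : seqLt x y) (h' : seqLt y z) : seqLt x z := by
  obtain ⟨n, hn, hn'⟩ := h
  obtain ⟨k, hk, hk'⟩ := h'
  rcases lt_trichotomy n k with hlt | rfl | hlt
  · exact ⟨n, fun i hi => (hn i hi).trans (hk i (hi.trans hlt)), hk n hlt ▸ hn'⟩
  · exact ⟨n, fun i hi => (hn i hi).trans (hk i hi), hn'.trans hk'⟩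
  · exact ⟨k, fun i hi => (hn i (hi.trans hlt)).trans (hk i hi), (hn k hlt).symm ▸ hk'⟩

theorem seqLt.irrefl (x : ℕ → ℕ) : ¬ seqLt x x := fun ⟨_, _, h⟩ => lt_irrefl _ h

theorem seqLe.trans {x y z : ℕ → ℕ} (h : seqLe x y) (h' : seqLe y z) : seqLe x z := by
  rcases h with rfl | h
  · exact h'
  · rcases h' with rfl | h'
    · exact h.le
    · exact (h.trans h').le

theorem seqLe.trans_lt {x y z : ℕ → ℕ} (h : seqLe x y) (h' : seqLt y z) : seqLt x z := by
  rcases h with rfl | h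
  · exact h'
  · exact h.trans h'

theorem seqLt.trans_le {x y z : ℕ → ℕ} (h : seqLt x y) (h' : seqLe y z) : seqLt x z := by
  rcases h' with rfl | h'
  · exact h
  · exact h.trans h'

theorem seqLe.not_lt {x y : ℕ → ℕ} (h : seqLe x y) : ¬ seqLt y x := fun h' =>
  seqLt.irrefl _ (h.trans_lt h')

theorem seqLe_or_lt (x y : ℕ → ℕ) : seqLe x y ∨ seqLt y x := by
  classical
  by_cases h : x = y
  · exact Or.inl (Or.inl h)
  · have hne : ∃ n, x n ≠ y n := Function.ne_iff.mp h
    have hfst : ∀ i < Nat.find hne, x i = y i := fun i hi => not_not.mp (Nat.find_min hne hi)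
    rcases lt_or_gt_of_ne (Nat.find_spec hne) with hlt | hlt
    · exact Or.inl (Or.inr ⟨_, hfst, hlt⟩)
    · exact Or.inr ⟨_, fun i hi => (hfst i hi).symm, hlt⟩

theorem seqLe_of_not_lt {x y : ℕ → ℕ} (h : ¬ seqLt y x) : seqLe x y :=
  (seqLe_or_lt x y).resolve_right h

theorem seqLe.antisymm {x y : ℕ → ℕ} (h : seqLe x y) (h' : seqLe y x) : x = y :=
  h.resolve_right h'.not_lt

/-- Two sequences in lexicographic order stay in strict order after changing them from
position `k` on so that a tie or a gap at `k` becomes a gap. -/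
theorem seqLe.lt_of_perturb {x y x' y' : ℕ → ℕ} (h : seqLe x y) (k : ℕ)
    (hx : ∀ i < k, x' i = x i) (hy : ∀ i < k, y' i = y i)
    (hk : x k ≤ y k → x' k < y' k) : seqLt x' y' := by
  rcases h with rfl | ⟨n, hn, hn'⟩
  · exact ⟨k, fun i hi => (hx i hi).trans (hy i hi).symm, hk le_rfl⟩
  · rcases lt_trichotomy n k with hlt | rfl | hlt
    · exact ⟨n, fun i hi => by rw [hx i (hi.trans hlt), hy i (hi.trans hlt), hn i hi],
        by rw [hx n hlt, hy n hlt]; exact hn'⟩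
    · exact ⟨n, fun i hi => by rw [hx i hi, hy i hi, hn i hi], hk hn'.le⟩
    · exact ⟨k, fun i hi => by rw [hx i hi, hy i hi, hn i (hi.trans hlt)], hk (hn k hlt).le⟩

theorem seqLt.shift {x y : ℕ → ℕ} (h : seqLt x y) (k : ℕ) (hk : ∀ i < k, x i = y i) :
    seqLt (shiftn k x) (shiftn k y) := by
  obtain ⟨n, hn, hn'⟩ := h
  have hkn : k ≤ n := by
    by_contra! hlt
    exact hn'.ne (hk n hlt)
  refine ⟨n - k, fun i hi => hn _ (by omega), ?_⟩
  simpa only [shiftn, Nat.sub_add_cancel hkn] using hn'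

theorem seqLe.shift {x y : ℕ → ℕ} (h : seqLe x y) (k : ℕ) (hk : ∀ i < k, x i = y i) :
    seqLe (shiftn k x) (shiftn k y) := by
  rcases h with rfl | h
  · exact seqLe.refl _
  · exact (h.shift k hk).le

theorem seqLt.of_shift {x y : ℕ → ℕ} (k : ℕ) (hk : ∀ i < k, x i = y i)
    (h : seqLt (shiftn k x) (shiftn k y)) : seqLt x y := by
  obtain ⟨n, hn, hn'⟩ := h
  refine ⟨n + k, fun i hi => ?_, hn'⟩
  rcases lt_or_ge i k with hik | hik
  · exact hk i hik
  · simpa only [shiftn, Nat.sub_add_cancel hik] using hn (i - k) (by omega)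

theorem seqLe.le_of_agree {x y : ℕ → ℕ} (h : seqLe x y) (k : ℕ) (hk : ∀ i < k, x i = y i) :
    x k ≤ y k := by
  rcases h with rfl | ⟨n, hn, hn'⟩
  · exact le_rfl
  · rcases lt_trichotomy n k with hlt | rfl | hlt
    · exact absurd (hk n hlt) hn'.ne
    · exact hn'.le
    · exact (hn k hlt).le

theorem seqLe.head_le {x y : ℕ → ℕ} (h : seqLe x y) : x 0 ≤ y 0 :=
  h.le_of_agree 0 fun _ hi => absurd hi (Nat.not_lt_zero _)

/-- Squeezing: two sequences in lexicographic order which enclose a third one and agree up to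
position `k` force the third one to agree with them there. -/
theorem seqLe.eq_of_squeeze {x y z : ℕ → ℕ} (h : seqLe x y) (h' : seqLe y z) (k : ℕ)
    (hk : ∀ i < k, x i = z i) : ∀ i < k, y i = x i := by
  intro i
  induction i using Nat.strong_induction_on with
  | _ i ih =>
    intro hi
    have h1 := h.le_of_agree i fun j hj => (ih j hj (hj.trans hi)).symm
    have h2 := h'.le_of_agree i fun j hj => (ih j hj (hj.trans hi)).trans (hk j (hj.trans hi))
    have h3 := hk i hi
    omega

theorem shiftn_zero (x : ℕ → ℕ) : shiftn 0 x = x := rfl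

theorem shiftn_shiftn (i j : ℕ) (x : ℕ → ℕ) : shiftn i (shiftn j x) = shiftn (i + j) x := by
  funext k
  simp only [shiftn, add_assoc]

/-- Sequences with a tail in a countable set form a countable set. -/
theorem Set.Countable.tails {C : Set (ℕ → ℕ)} (hC : C.Countable) :
    {d : ℕ → ℕ | ∃ n, shiftn n d ∈ C}.Countable := by
  have hsub : {d : ℕ → ℕ | ∃ n, shiftn n d ∈ C} ⊆
      ⋃ w : List ℕ, Set.image (wordSeq w) C := by
    rintro d ⟨n, hn⟩
    refine mem_iUnion.mpr ⟨List.ofFn fun i : Fin n => d i, _, hn, ?_⟩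
    funext i
    simp only [wordSeq, List.length_ofFn, shiftn]
    split_ifs with hi
    · simp [List.getD, hi]
    · rw [Nat.sub_add_cancel (not_lt.mp hi)]
  exact (countable_iUnion fun w => hC.image _).mono hsub

/-- The sequences all of whose shifts lie between `a` and `b`. -/
def seqBetween (a b : ℕ → ℕ) : Set (ℕ → ℕ) :=
  {d | ∀ n, seqLe a (shiftn n d) ∧ seqLe (shiftn n d) b}

/-! ### Periodic minimal and maximal sequences -/

/-- `a = s^∞` for a Lyndon word `s` of length `m` with nonzero last letter, and `b = L(s)^∞`. -/
structure IsLyndonPair (m : ℕ) (a b : ℕ → ℕ) : Prop where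
  pos : 0 < m
  periodic : ∀ i, a (i + m) = a i
  exists_shift : ∃ g, b = shiftn g a
  min : ∀ n, seqLe a (shiftn n a)
  max : ∀ n, seqLe (shiftn n b) b
  primitive : ∀ i, 0 < i → i < m → shiftn i a ≠ a
  last : 1 ≤ a (m - 1)

namespace IsLyndonPair

variable {m : ℕ} {a b : ℕ → ℕ}

theorem periodic_mul (h : IsLyndonPair m a b) (i q : ℕ) : a (i + m * q) = a i := by
  induction q with
  | zero => rfl
  | succ q ih => rw [Nat.mul_succ, ← add_assoc, h.periodic, ih]

theorem periodic_right (h : IsLyndonPair m a b) (i : ℕ) : b (i + m) = b i := by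
  obtain ⟨g, rfl⟩ := h.exists_shift
  simp only [shiftn]
  rw [add_right_comm, h.periodic]

theorem shift_period (h : IsLyndonPair m a b) : shiftn m a = a := funext h.periodic

theorem shift_period_right (h : IsLyndonPair m a b) : shiftn m b = b := funext h.periodic_right

theorem mod_period (h : IsLyndonPair m a b) (i : ℕ) : a (i % m) = a i := by
  conv_rhs => rw [← Nat.mod_add_div i m, h.periodic_mul]

theorem mod_period_right (h : IsLyndonPair m a b) (i : ℕ) : b (i % m) = b i := by
  obtain ⟨g, rfl⟩ := h.exists_shift
  simp only [shiftn]
  rw [← h.mod_period (i + g), ← h.mod_period (i % m + g), Nat.mod_add_mod]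

theorem le_shift_right (h : IsLyndonPair m a b) (n : ℕ) : seqLe a (shiftn n b) := by
  obtain ⟨g, rfl⟩ := h.exists_shift
  rw [shiftn_shiftn]
  exact h.min _

theorem shift_le_right (h : IsLyndonPair m a b) (n : ℕ) : seqLe (shiftn n a) b := by
  obtain ⟨g, hg⟩ := h.exists_shift
  have hmg : g ≤ m * g := Nat.le_mul_of_pos_left g h.pos
  have : shiftn n a = shiftn (n + (m * g - g)) b := by
    rw [hg, shiftn_shiftn]
    funext i
    simp only [shiftn]
    rw [show i + (n + (m * g - g) + g) = i + n + m * g by omega, h.periodic_mul]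
  rw [this]
  exact h.max _

theorem left_le_right (h : IsLyndonPair m a b) : seqLe a b := h.shift_le_right 0

/-- A proper suffix of the Lyndon word is strictly larger than the prefix of the same length. -/
theorem suffix_gt (h : IsLyndonPair m a b) {j : ℕ} (hj : 0 < j) (hjm : j < m) :
    ∃ k < m - j, (∀ i < k, a i = a (i + j)) ∧ a k < a (k + j) := by
  obtain ⟨k, hk, hk'⟩ : seqLt a (shiftn j a) :=
    (h.min j).resolve_left fun he => h.primitive j hj hjm he.symm
  by_cases hkj : k < m - j
  · exact ⟨k, hkj, hk, hk'⟩
  · exfalso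
    have hlt : seqLt a (shiftn j a) := ⟨k, hk, hk'⟩
    have := hlt.shift (m - j) fun i hi => hk i (by omega)
    rw [shiftn_shiftn, Nat.sub_add_cancel hjm.le, h.shift_period] at this
    exact (h.min _).not_lt this

/-- A proper suffix of the maximal rotation is strictly smaller than the prefix of the same
length. -/
theorem suffix_lt (h : IsLyndonPair m a b) {j : ℕ} (hj : 0 < j) (hjm : j < m) :
    ∃ k < m - j, (∀ i < k, b (i + j) = b i) ∧ b (k + j) < b k := by
  have hne : shiftn j b ≠ b := by
    intro he
    apply h.primitive j hj hjm
    obtain ⟨g, hg⟩ := h.exists_shift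
    have hmg : g ≤ m * g := Nat.le_mul_of_pos_left g h.pos
    have key : ∀ i, a i = b (i + (m * g - g)) := by
      intro i
      rw [hg]
      simp only [shiftn]
      rw [show i + (m * g - g) + g = i + m * g by omega, h.periodic_mul]
    funext i
    have := congrFun he (i + (m * g - g))
    simp only [shiftn] at this ⊢
    rw [key, key, ← this]
    congr 1
    omega
  obtain ⟨k, hk, hk'⟩ : seqLt (shiftn j b) b := (h.max j).resolve_left hne
  by_cases hkj : k < m - j
  · exact ⟨k, hkj, hk, hk'⟩
  · exfalso
    have hlt : seqLt (shiftn j b) b := ⟨k, hk, hk'⟩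
    have := hlt.shift (m - j) fun i hi => hk i (by omega)
    rw [shiftn_shiftn, Nat.sub_add_cancel hjm.le, h.shift_period_right] at this
    exact (h.max _).not_lt this

end IsLyndonPair

/-! ### The block substitution -/

/-- The digit preceding position `q` in the sequence `p c₀ c₁ …`. -/
def prevDigit (p : ℕ) (c : ℕ → ℕ) : ℕ → ℕ
  | 0 => p
  | q + 1 => c q

/-- The substitution `Φ_s` applied to the binary sequence `c` preceded by the digit `p`, where
`a = s^∞` and `b = L(s)^∞`: the block emitted for a digit `d` after `p` follows `b` if `p = 0` and
`a` if `p = 1`, with its last letter changed by `d - p`. -/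
def blockSubst (m : ℕ) (a b : ℕ → ℕ) (p : ℕ) (c : ℕ → ℕ) (i : ℕ) : ℕ :=
  (if prevDigit p c (i / m) = 0 then b (i % m) else a (i % m)) +
    (if i % m = m - 1 then c (i / m) else 0) -
    (if i % m = m - 1 then prevDigit p c (i / m) else 0)

theorem prevDigit_shift (p : ℕ) (c : ℕ → ℕ) (q : ℕ) :
    prevDigit (c 0) (shiftn 1 c) q = prevDigit p c (q + 1) := by
  cases q <;> rfl

theorem prevDigit_le_one {p : ℕ} {c : ℕ → ℕ} (hp : p ≤ 1) (hc : ∀ i, c i ≤ 1) (q : ℕ) :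
    prevDigit p c q ≤ 1 := by
  cases q
  · exact hp
  · exact hc _

section blockSubst

variable {m : ℕ} {a b : ℕ → ℕ}

theorem blockSubst_of_lt (p : ℕ) (c : ℕ → ℕ) {i : ℕ} (hi : i + 1 < m) :
    blockSubst m a b p c i = if p = 0 then b i else a i := by
  have h1 : i / m = 0 := Nat.div_eq_of_lt (by omega)
  have h2 : i % m = i := Nat.mod_eq_of_lt (by omega)
  have h3 : i ≠ m - 1 := by omega
  simp [blockSubst, h1, h2, h3, prevDigit]

theorem blockSubst_last (hm : 0 < m) (p : ℕ) (c : ℕ → ℕ) :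
    blockSubst m a b p c (m - 1) = (if p = 0 then b (m - 1) else a (m - 1)) + c 0 - p := by
  have h1 : (m - 1) / m = 0 := Nat.div_eq_of_lt (by omega)
  have h2 : (m - 1) % m = m - 1 := Nat.mod_eq_of_lt (by omega)
  simp [blockSubst, h1, h2, prevDigit]

theorem shift_blockSubst (hm : 0 < m) (p : ℕ) (c : ℕ → ℕ) :
    shiftn m (blockSubst m a b p c) = blockSubst m a b (c 0) (shiftn 1 c) := by
  funext i
  simp only [blockSubst, shiftn, Nat.add_div_right _ hm, Nat.add_mod_right,
    ← prevDigit_shift p c]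

theorem blockSubst_add (hm : 0 < m) (p : ℕ) (c : ℕ → ℕ) (i : ℕ) :
    blockSubst m a b p c (i + m) = blockSubst m a b (c 0) (shiftn 1 c) i :=
  congrFun (shift_blockSubst hm p c) i

theorem shift_mul_blockSubst (hm : 0 < m) (p : ℕ) (c : ℕ → ℕ) (q : ℕ) :
    shiftn (m * q) (blockSubst m a b p c) = blockSubst m a b (prevDigit p c q) (shiftn q c) := by
  induction q generalizing p c with
  | zero => rfl
  | succ q ih =>
    rw [Nat.mul_succ, ← shiftn_shiftn, shift_blockSubst hm, ih, prevDigit_shift p c, shiftn_shiftn]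

theorem blockSubst_strictMono (h : IsLyndonPair m a b) {p : ℕ} (hp : p ≤ 1) {c c' : ℕ → ℕ}
    (hc : ∀ i, c i ≤ 1) (hlt : seqLt c c') :
    seqLt (blockSubst m a b p c) (blockSubst m a b p c') := by
  obtain ⟨n, hn, hn'⟩ := hlt
  induction n generalizing p c c' with
  | zero =>
    refine ⟨m - 1, fun i hi => ?_, ?_⟩
    · rw [blockSubst_of_lt _ _ (by omega), blockSubst_of_lt _ _ (by omega)]
    · rw [blockSubst_last h.pos, blockSubst_last h.pos]
      have := h.last
      split_ifs <;> omega
  | succ n ih =>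
    have h0 : c 0 = c' 0 := hn 0 (Nat.succ_pos n)
    refine seqLt.of_shift m (fun i hi => ?_) ?_
    · rcases Nat.lt_or_ge (i + 1) m with hi' | hi'
      · rw [blockSubst_of_lt _ _ hi', blockSubst_of_lt _ _ hi']
      · rw [show i = m - 1 by omega, blockSubst_last h.pos, blockSubst_last h.pos, h0]
    · rw [shift_blockSubst h.pos, shift_blockSubst h.pos, ← h0]
      exact ih (hc 0) (fun i => hc (i + 1)) (fun i hi => hn (i + 1) (by omega)) hn'

theorem blockSubst_mono (h : IsLyndonPair m a b) {p : ℕ} (hp : p ≤ 1) {c c' : ℕ → ℕ}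
    (hc : ∀ i, c i ≤ 1) (hle : seqLe c c') :
    seqLe (blockSubst m a b p c) (blockSubst m a b p c') := by
  rcases hle with rfl | hlt
  · exact seqLe.refl _
  · exact (blockSubst_strictMono h hp hc hlt).le

theorem seqLe_of_blockSubst_le (h : IsLyndonPair m a b) {p : ℕ} (hp : p ≤ 1) {c c' : ℕ → ℕ}
    (hc' : ∀ i, c' i ≤ 1) (hle : seqLe (blockSubst m a b p c) (blockSubst m a b p c')) :
    seqLe c c' :=
  seqLe_of_not_lt fun hlt => hle.not_lt (blockSubst_strictMono h hp hc' hlt)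

/-- Shifts of a substituted sequence which do not start at the beginning of a block are strictly
larger than the substituted sequences starting with `s⁻`. -/
theorem blockSubst_lt_shift (h : IsLyndonPair m a b) {p : ℕ} (hp : p ≤ 1) {c c' : ℕ → ℕ}
    (hc : c 0 ≤ 1) (hc' : c' 0 = 0) {j : ℕ} (hj : 0 < j) (hjm : j < m) :
    seqLt (blockSubst m a b 1 c') (shiftn j (blockSubst m a b p c)) := by
  have hy : ∀ i, i + 1 < m → blockSubst m a b 1 c' i = a i := fun i hi => by
    rw [blockSubst_of_lt _ _ hi, if_neg one_ne_zero]
  have hy' : blockSubst m a b 1 c' (m - 1) = a (m - 1) - 1 := by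
    rw [blockSubst_last h.pos, if_neg one_ne_zero, hc', add_zero]
  have hlast := h.last
  obtain rfl | rfl : p = 0 ∨ p = 1 := by omega
  · have hx : ∀ i, i + j + 1 < m → shiftn j (blockSubst m a b 0 c) i = shiftn j b i :=
        fun i hi => by
      rw [shiftn, blockSubst_of_lt _ _ hi, if_pos rfl, shiftn]
    have hx' : shiftn j (blockSubst m a b 0 c) (m - 1 - j) = shiftn j b (m - 1 - j) + c 0 := by
      simp only [shiftn]
      rw [show m - 1 - j + j = m - 1 by omega, blockSubst_last h.pos, if_pos rfl, Nat.sub_zero]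
    obtain hc0 | hc0 : c 0 = 0 ∨ c 0 = 1 := by omega
    · have hx2 : ∀ i < m, shiftn j (blockSubst m a b 0 c) i = shiftn j b i := by
        intro i hi
        rcases lt_trichotomy i (m - 1 - j) with hlt | rfl | hlt
        · exact hx i (by omega)
        · rw [hx', hc0, add_zero]
        · simp only [shiftn]
          rw [show i + j = i + j - m + m by omega, blockSubst_add h.pos, hc0,
            blockSubst_of_lt _ _ (by omega), if_pos rfl, h.periodic_right]
      refine (h.le_shift_right j).lt_of_perturb (m - 1) (fun i hi => hy i (by omega))
        (fun i hi => hx2 i (by omega)) fun hle => ?_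
      rw [hy', hx2 _ (by omega)]
      omega
    · refine (h.le_shift_right j).lt_of_perturb (m - 1 - j) (fun i hi => hy i (by omega))
        (fun i hi => hx i (by omega)) fun hle => ?_
      rw [hy _ (by omega), hx', hc0]
      omega
  · have hx : ∀ i, i + j + 1 < m → shiftn j (blockSubst m a b 1 c) i = a (i + j) := fun i hi => by
      rw [shiftn, blockSubst_of_lt _ _ hi, if_neg one_ne_zero]
    have hx' : shiftn j (blockSubst m a b 1 c) (m - 1 - j) = a (m - 1) + c 0 - 1 := by
      simp only [shiftn]
      rw [show m - 1 - j + j = m - 1 by omega, blockSubst_last h.pos, if_neg one_ne_zero]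
    obtain ⟨k, hkj, hk, hk'⟩ := h.suffix_gt hj hjm
    rcases Nat.lt_or_ge k (m - 1 - j) with hlt | hge
    · refine ⟨k, fun i hi => ?_, ?_⟩
      · rw [hy i (by omega), hx i (by omega), hk i hi]
      · rwa [hy k (by omega), hx k (by omega)]
    · obtain rfl : k = m - 1 - j := by omega
      rw [show m - 1 - j + j = m - 1 by omega] at hk'
      have hagree : ∀ i < m - 1 - j,
          blockSubst m a b 1 c' i = shiftn j (blockSubst m a b 1 c) i := fun i hi => by
        rw [hy i (by omega), hx i (by omega), hk i hi]
      rcases Nat.lt_or_ge (a (m - 1 - j)) (a (m - 1) + c 0 - 1) with hlt | hge'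
      · exact ⟨m - 1 - j, hagree, by rwa [hy _ (by omega), hx']⟩
      · have hc0 : c 0 = 0 := by omega
        refine seqLt.of_shift (m - j) (fun i hi => ?_) ?_
        · rcases Nat.lt_or_ge i (m - 1 - j) with hi' | hi'
          · exact hagree i hi'
          · rw [show i = m - 1 - j by omega, hx', hy _ (by omega)]
            omega
        · rw [shiftn_shiftn, Nat.sub_add_cancel hjm.le, shift_blockSubst h.pos, hc0]
          refine (h.shift_le_right (m - j)).lt_of_perturb (j - 1) (fun i hi => ?_) (fun i hi => ?_)
            fun hle => ?_
          · simp only [shiftn]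
            rw [hy _ (by omega)]
          · rw [blockSubst_of_lt _ _ (by omega), if_pos rfl]
          · rw [blockSubst_of_lt _ _ (by omega), if_pos rfl]
            simp only [shiftn] at hle ⊢
            rw [show j - 1 + (m - j) = m - 1 by omega] at hle ⊢
            rw [hy']
            omega

/-- Shifts of a substituted sequence which do not start at the beginning of a block are strictly
smaller than the substituted sequences starting with `L(s)⁺`. -/
theorem shift_lt_blockSubst (h : IsLyndonPair m a b) {p : ℕ} (hp : p ≤ 1) {c c' : ℕ → ℕ}
    (hc : c 0 ≤ 1) (hc' : c' 0 = 1) {j : ℕ} (hj : 0 < j) (hjm : j < m) :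
    seqLt (shiftn j (blockSubst m a b p c)) (blockSubst m a b 0 c') := by
  have hy : ∀ i, i + 1 < m → blockSubst m a b 0 c' i = b i := fun i hi => by
    rw [blockSubst_of_lt _ _ hi, if_pos rfl]
  have hy' : blockSubst m a b 0 c' (m - 1) = b (m - 1) + 1 := by
    rw [blockSubst_last h.pos, if_pos rfl, hc', Nat.sub_zero]
  have hlast := h.last
  obtain rfl | rfl : p = 0 ∨ p = 1 := by omega
  · have hx : ∀ i, i + j + 1 < m → shiftn j (blockSubst m a b 0 c) i = b (i + j) := fun i hi => by
      rw [shiftn, blockSubst_of_lt _ _ hi, if_pos rfl]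
    have hx' : shiftn j (blockSubst m a b 0 c) (m - 1 - j) = b (m - 1) + c 0 := by
      simp only [shiftn]
      rw [show m - 1 - j + j = m - 1 by omega, blockSubst_last h.pos, if_pos rfl, Nat.sub_zero]
    obtain ⟨k, hkj, hk, hk'⟩ := h.suffix_lt hj hjm
    rcases Nat.lt_or_ge k (m - 1 - j) with hlt | hge
    · refine ⟨k, fun i hi => ?_, ?_⟩
      · rw [hy i (by omega), hx i (by omega), hk i hi]
      · rwa [hy k (by omega), hx k (by omega)]
    · obtain rfl : k = m - 1 - j := by omega
      rw [show m - 1 - j + j = m - 1 by omega] at hk'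
      have hagree : ∀ i < m - 1 - j,
          shiftn j (blockSubst m a b 0 c) i = blockSubst m a b 0 c' i := fun i hi => by
        rw [hy i (by omega), hx i (by omega), hk i hi]
      rcases Nat.lt_or_ge (b (m - 1) + c 0) (b (m - 1 - j)) with hlt | hge'
      · exact ⟨m - 1 - j, hagree, by rwa [hy _ (by omega), hx']⟩
      · have hc0 : c 0 = 1 := by omega
        refine seqLt.of_shift (m - j) (fun i hi => ?_) ?_
        · rcases Nat.lt_or_ge i (m - 1 - j) with hi' | hi'
          · exact hagree i hi'
          · rw [show i = m - 1 - j by omega, hx', hy _ (by omega)]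
            omega
        · rw [shiftn_shiftn, Nat.sub_add_cancel hjm.le, shift_blockSubst h.pos, hc0]
          refine (h.le_shift_right (m - j)).lt_of_perturb (j - 1) (fun i hi => ?_) (fun i hi => ?_)
            fun hle => ?_
          · rw [blockSubst_of_lt _ _ (by omega), if_neg one_ne_zero]
          · simp only [shiftn]
            rw [hy _ (by omega)]
          · rw [blockSubst_of_lt _ _ (by omega), if_neg one_ne_zero]
            simp only [shiftn] at hle ⊢
            rw [show j - 1 + (m - j) = m - 1 by omega] at hle ⊢
            rw [hy']
            omega
  · have hx : ∀ i, i + j + 1 < m → shiftn j (blockSubst m a b 1 c) i = shiftn j a i :=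
        fun i hi => by
      rw [shiftn, blockSubst_of_lt _ _ hi, if_neg one_ne_zero, shiftn]
    have hx' : shiftn j (blockSubst m a b 1 c) (m - 1 - j) = a (m - 1) + c 0 - 1 := by
      simp only [shiftn]
      rw [show m - 1 - j + j = m - 1 by omega, blockSubst_last h.pos, if_neg one_ne_zero]
    have hxa : shiftn j a (m - 1 - j) = a (m - 1) := by
      rw [shiftn, show m - 1 - j + j = m - 1 by omega]
    obtain hc0 | hc0 : c 0 = 0 ∨ c 0 = 1 := by omega
    · refine (h.shift_le_right j).lt_of_perturb (m - 1 - j) (fun i hi => hx i (by omega))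
        (fun i hi => hy i (by omega)) fun hle => ?_
      rw [hy _ (by omega), hx', hc0]
      omega
    · have hx2 : ∀ i < m, shiftn j (blockSubst m a b 1 c) i = shiftn j a i := by
        intro i hi
        rcases lt_trichotomy i (m - 1 - j) with hlt | rfl | hlt
        · exact hx i (by omega)
        · rw [hx', hc0, hxa]
          omega
        · simp only [shiftn]
          rw [show i + j = i + j - m + m by omega, blockSubst_add h.pos, hc0,
            blockSubst_of_lt _ _ (by omega), if_neg one_ne_zero, h.periodic]
      refine (h.shift_le_right j).lt_of_perturb (m - 1) (fun i hi => hx2 i (by omega))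
        (fun i hi => hy i (by omega)) fun hle => ?_
      rw [hy', hx2 _ (by omega)]
      omega

end blockSubst

section decoding

variable {m : ℕ} {a b : ℕ → ℕ}

theorem blockSubst_one_lt_zero_of_head_zero (h : IsLyndonPair m a b) {c c' : ℕ → ℕ}
    (hc : c 0 = 0) : seqLt (blockSubst m a b 1 c) (blockSubst m a b 0 c') := by
  refine h.left_le_right.lt_of_perturb (m - 1) (fun i hi => ?_) (fun i hi => ?_) fun hle => ?_
  · rw [blockSubst_of_lt _ _ (by omega), if_neg one_ne_zero]
  · rw [blockSubst_of_lt _ _ (by omega), if_pos rfl]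
  · rw [blockSubst_last h.pos, blockSubst_last h.pos, if_neg one_ne_zero, if_pos rfl, hc]
    have := h.last
    omega

theorem blockSubst_one_lt_zero_of_head_one (h : IsLyndonPair m a b) {c c' : ℕ → ℕ}
    (hc : c 0 ≤ 1) (hc' : c' 0 = 1) : seqLt (blockSubst m a b 1 c) (blockSubst m a b 0 c') := by
  refine h.left_le_right.lt_of_perturb (m - 1) (fun i hi => ?_) (fun i hi => ?_) fun hle => ?_
  · rw [blockSubst_of_lt _ _ (by omega), if_neg one_ne_zero]
  · rw [blockSubst_of_lt _ _ (by omega), if_pos rfl]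
  · rw [blockSubst_last h.pos, blockSubst_last h.pos, if_neg one_ne_zero, if_pos rfl, hc']
    omega

theorem shift_blockSubst_eq (hm : 0 < m) (p : ℕ) (c : ℕ → ℕ) (n : ℕ) :
    shiftn n (blockSubst m a b p c) =
      shiftn (n % m) (blockSubst m a b (prevDigit p c (n / m)) (shiftn (n / m) c)) := by
  rw [← shift_mul_blockSubst hm, shiftn_shiftn, Nat.mod_add_div]

theorem blockSubst_le_shift (h : IsLyndonPair m a b) {p : ℕ} (hp : p ≤ 1) {c α : ℕ → ℕ}
    (hc : ∀ i, c i ≤ 1) (hα : ∀ i, α i ≤ 1) (hα0 : α 0 = 0)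
    (hle : ∀ q, prevDigit p c q = 1 → seqLe α (shiftn q c)) (n : ℕ) :
    seqLe (blockSubst m a b 1 α) (shiftn n (blockSubst m a b p c)) := by
  rw [shift_blockSubst_eq h.pos]
  have hprev := prevDigit_le_one hp hc (n / m)
  rcases Nat.eq_zero_or_pos (n % m) with hj | hj
  · rw [hj, shiftn_zero]
    obtain h0 | h1 : prevDigit p c (n / m) = 0 ∨ prevDigit p c (n / m) = 1 := by omega
    · rw [h0]
      exact (blockSubst_one_lt_zero_of_head_zero h hα0).le
    · rw [h1]
      exact blockSubst_mono h le_rfl hα (hle _ h1)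
  · exact (blockSubst_lt_shift h hprev (c := shiftn (n / m) c) (hc _) hα0 hj
      (Nat.mod_lt _ h.pos)).le

theorem shift_le_blockSubst (h : IsLyndonPair m a b) {p : ℕ} (hp : p ≤ 1) {c ω : ℕ → ℕ}
    (hc : ∀ i, c i ≤ 1) (hω0 : ω 0 = 1)
    (hle : ∀ q, prevDigit p c q = 0 → seqLe (shiftn q c) ω) (n : ℕ) :
    seqLe (shiftn n (blockSubst m a b p c)) (blockSubst m a b 0 ω) := by
  rw [shift_blockSubst_eq h.pos]
  have hprev := prevDigit_le_one hp hc (n / m)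
  rcases Nat.eq_zero_or_pos (n % m) with hj | hj
  · rw [hj, shiftn_zero]
    obtain h0 | h1 : prevDigit p c (n / m) = 0 ∨ prevDigit p c (n / m) = 1 := by omega
    · rw [h0]
      exact blockSubst_mono h zero_le_one (fun i => hc _) (hle _ h0)
    · rw [h1]
      exact (blockSubst_one_lt_zero_of_head_one h (c := shiftn (n / m) c) (hc _) hω0).le
  · exact (shift_lt_blockSubst h hprev (c := shiftn (n / m) c) (hc _) hω0 hj
      (Nat.mod_lt _ h.pos)).le

theorem zero_seqLe (c : ℕ → ℕ) : seqLe (fun _ => 0) c :=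
  seqLe_of_not_lt fun ⟨_, _, h⟩ => absurd h (Nat.not_lt_zero _)

theorem seqLe_one {c : ℕ → ℕ} (hc : ∀ i, c i ≤ 1) : seqLe c (fun _ => 1) :=
  seqLe_of_not_lt fun ⟨n, _, h⟩ => absurd h (not_lt.mpr (hc n))

theorem blockSubst_const_zero (h : IsLyndonPair m a b) :
    blockSubst m a b 0 (fun _ => 0) = b := by
  funext i
  have hprev : prevDigit 0 (fun _ => 0) (i / m) = 0 := by cases i / m <;> rfl
  simp [blockSubst, hprev, h.mod_period_right]

theorem blockSubst_const_one (h : IsLyndonPair m a b) :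
    blockSubst m a b 1 (fun _ => 1) = a := by
  funext i
  have hprev : prevDigit 1 (fun _ => 1) (i / m) = 1 := by cases i / m <;> rfl
  simp [blockSubst, hprev, h.mod_period]

/-- The states of the decoding automaton reading the blocks of `x`. -/
def decodeState (m : ℕ) (a b : ℕ → ℕ) (p : ℕ) (x : ℕ → ℕ) : ℕ → ℕ
  | 0 => p
  | q + 1 => x (m * q + (m - 1)) + decodeState m a b p x q -
      (if decodeState m a b p x q = 0 then b (m - 1) else a (m - 1))

theorem decode_step (h : IsLyndonPair m a b) {p : ℕ} {x : ℕ → ℕ}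
    (hlow : seqLe (blockSubst m a b 1 fun _ => 0) x)
    (hupp : seqLe x (blockSubst m a b 0 fun _ => 1))
    (hinv : (p = 0 ∧ seqLe b x) ∨ (p = 1 ∧ seqLe x a)) :
    ∃ d ≤ 1, (∀ i, i + 1 < m → x i = if p = 0 then b i else a i) ∧
      x (m - 1) + p = (if p = 0 then b (m - 1) else a (m - 1)) + d ∧
      ((d = 0 ∧ seqLe b (shiftn m x)) ∨ (d = 1 ∧ seqLe (shiftn m x) a)) := by
  have hlast := h.last
  rcases hinv with ⟨rfl, hb⟩ | ⟨rfl, ha⟩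
  · have htop : ∀ i < m - 1, b i = blockSubst m a b 0 (fun _ => 1) i := fun i hi => by
      rw [blockSubst_of_lt _ _ (by omega), if_pos rfl]
    have htop' : blockSubst m a b 0 (fun _ => 1) (m - 1) = b (m - 1) + 1 := by
      rw [blockSubst_last h.pos, if_pos rfl, Nat.sub_zero]
    have hagree := hb.eq_of_squeeze hupp (m - 1) htop
    have h1 := hb.le_of_agree (m - 1) fun i hi => (hagree i hi).symm
    have h2 := hupp.le_of_agree (m - 1) fun i hi => (hagree i hi).trans (htop i hi)
    rw [htop'] at h2
    obtain he | he : x (m - 1) = b (m - 1) ∨ x (m - 1) = b (m - 1) + 1 := by omega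
    · refine ⟨0, zero_le_one, fun i hi => by rw [if_pos rfl, hagree i (by omega)],
        by rw [if_pos rfl, he], Or.inl ⟨rfl, ?_⟩⟩
      have := hb.shift m fun i hi => by
        rcases Nat.lt_or_ge i (m - 1) with hi' | hi'
        · exact (hagree i hi').symm
        · rw [show i = m - 1 by omega, he]
      rwa [h.shift_period_right] at this
    · refine ⟨1, le_rfl, fun i hi => by rw [if_pos rfl, hagree i (by omega)],
        by rw [if_pos rfl, he], Or.inr ⟨rfl, ?_⟩⟩
      have := hupp.shift m fun i hi => by
        rcases Nat.lt_or_ge i (m - 1) with hi' | hi'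
        · exact (hagree i hi').trans (htop i hi')
        · rw [show i = m - 1 by omega, he, htop']
      rw [shift_blockSubst h.pos] at this
      exact this.trans (Or.inl (blockSubst_const_one h))
  · have hbot : ∀ i < m - 1, blockSubst m a b 1 (fun _ => 0) i = a i := fun i hi => by
      rw [blockSubst_of_lt _ _ (by omega), if_neg one_ne_zero]
    have hbot' : blockSubst m a b 1 (fun _ => 0) (m - 1) = a (m - 1) - 1 := by
      rw [blockSubst_last h.pos, if_neg one_ne_zero, add_zero]
    have hagree : ∀ i < m - 1, x i = a i := fun i hi =>
      (hlow.eq_of_squeeze ha (m - 1) hbot i hi).trans (hbot i hi)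
    have h1 := ha.le_of_agree (m - 1) hagree
    have h2 := hlow.le_of_agree (m - 1) fun i hi => (hbot i hi).trans (hagree i hi).symm
    rw [hbot'] at h2
    obtain he | he : x (m - 1) = a (m - 1) ∨ x (m - 1) = a (m - 1) - 1 := by omega
    · refine ⟨1, le_rfl, fun i hi => by rw [if_neg one_ne_zero, hagree i (by omega)],
        by rw [if_neg one_ne_zero, he], Or.inr ⟨rfl, ?_⟩⟩
      have := ha.shift m fun i hi => by
        rcases Nat.lt_or_ge i (m - 1) with hi' | hi'
        · exact hagree i hi'
        · rw [show i = m - 1 by omega, he]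
      rwa [h.shift_period] at this
    · refine ⟨0, zero_le_one, fun i hi => by rw [if_neg one_ne_zero, hagree i (by omega)],
        by rw [if_neg one_ne_zero, he]; omega, Or.inl ⟨rfl, ?_⟩⟩
      have := hlow.shift m fun i hi => by
        rcases Nat.lt_or_ge i (m - 1) with hi' | hi'
        · exact (hbot i hi').trans (hagree i hi').symm
        · rw [show i = m - 1 by omega, he, hbot']
      rw [shift_blockSubst h.pos] at this
      exact seqLe.trans (Or.inl (blockSubst_const_zero h).symm) this

/-- A sequence with all shifts between `s⁻ L(s)^∞` and `L(s)⁺ s^∞`, which is itself at least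
`L(s)^∞` or at most `s^∞`, is a substituted sequence. -/
theorem exists_eq_blockSubst (h : IsLyndonPair m a b) {p : ℕ} {x : ℕ → ℕ}
    (hx : x ∈ seqBetween (blockSubst m a b 1 fun _ => 0) (blockSubst m a b 0 fun _ => 1))
    (hinv : (p = 0 ∧ seqLe b x) ∨ (p = 1 ∧ seqLe x a)) :
    ∃ c : ℕ → ℕ, (∀ i, c i ≤ 1) ∧ x = blockSubst m a b p c := by
  set st := decodeState m a b p x with hst
  have hinv' : ∀ q, (st q = 0 ∧ seqLe b (shiftn (m * q) x)) ∨
      (st q = 1 ∧ seqLe (shiftn (m * q) x) a) := by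
    intro q
    induction q with
    | zero => exact hinv
    | succ q ih =>
      obtain ⟨d, -, -, hd, hd'⟩ := decode_step h (hx (m * q)).1 (hx (m * q)).2 ih
      have hstd : st (q + 1) = d := by
        simp only [shiftn] at hd
        have : st (q + 1) = x (m * q + (m - 1)) + st q -
            (if st q = 0 then b (m - 1) else a (m - 1)) := rfl
        rw [this, add_comm (m * q) (m - 1), hd, Nat.add_sub_cancel_left]
      rw [hstd, Nat.mul_succ, add_comm (m * q) m, ← shiftn_shiftn]
      exact hd'
  have hprev : ∀ q, prevDigit p (fun q => st (q + 1)) q = st q := by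
    intro q
    cases q <;> rfl
  refine ⟨fun q => st (q + 1), fun q => ?_, ?_⟩
  · rcases hinv' (q + 1) with ⟨h0, -⟩ | ⟨h1, -⟩
    · exact h0.le.trans zero_le_one
    · exact h1.le
  · funext i
    obtain ⟨d, -, hd, hd', -⟩ :=
      decode_step h (hx (m * (i / m))).1 (hx (m * (i / m))).2 (hinv' (i / m))
    have hstd : st (i / m + 1) = x (m * (i / m) + (m - 1)) + st (i / m) -
        (if st (i / m) = 0 then b (m - 1) else a (m - 1)) := rfl
    have hmod := Nat.mod_lt i h.pos
    simp only [blockSubst, hprev]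
    rcases Nat.lt_or_ge (i % m + 1) m with hi | hi
    · have := hd _ hi
      simp only [shiftn, Nat.mod_add_div] at this
      have hne : i % m ≠ m - 1 := by omega
      simp only [if_neg hne, this, add_zero, Nat.sub_zero]
    · have heq : i % m = m - 1 := by omega
      simp only [shiftn] at hd'
      rw [add_comm (m - 1), ← heq, Nat.div_add_mod] at hd'
      rw [← heq, Nat.div_add_mod] at hstd
      simp only [heq, if_true] at hstd hd' ⊢
      omega

/-- Renormalization: the sequences with all shifts between `Φ_s(α)` and `Φ_s(ω)` form a countable
set as soon as this holds for `s^∞`, `L(s)^∞` and for `α`, `ω`. -/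
theorem countable_seqBetween_blockSubst (h : IsLyndonPair m a b)
    (hab : (seqBetween a b).Countable) {α ω : ℕ → ℕ} (hω : ∀ i, ω i ≤ 1)
    (hα0 : α 0 = 0) (hω0 : ω 0 = 1) (hα' : seqLe α (shiftn 1 α)) (hω' : seqLe (shiftn 1 ω) ω)
    (hαω : (seqBetween α ω).Countable) :
    (seqBetween (blockSubst m a b 1 α) (blockSubst m a b 0 ω)).Countable := by
  have hC : ({d : ℕ → ℕ | ∃ n, shiftn n d ∈ seqBetween α ω} ∪
      {fun _ => 0} ∪ {fun _ => 1}).Countable :=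
    (hαω.tails.union (countable_singleton _)).union (countable_singleton _)
  have hD := ((hC.image (blockSubst m a b 0)).union (hC.image (blockSubst m a b 1))).tails
  refine (hab.union hD).mono fun d hd => ?_
  by_cases hdab : d ∈ seqBetween a b
  · exact Or.inl hdab
  refine Or.inr ?_
  obtain ⟨n, p, hinv⟩ : ∃ n p, (p = 0 ∧ seqLe b (shiftn n d)) ∨ (p = 1 ∧ seqLe (shiftn n d) a) := by
    by_contra! hcon
    refine hdab fun n => ⟨?_, ?_⟩
    · exact (seqLe_or_lt _ _).resolve_right fun hlt => (hcon n 1).2 rfl hlt.le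
    · exact (seqLe_or_lt _ _).resolve_right fun hlt => (hcon n 0).1 rfl hlt.le
  have hx : shiftn n d ∈
      seqBetween (blockSubst m a b 1 fun _ => 0) (blockSubst m a b 0 fun _ => 1) := by
    intro k
    rw [shiftn_shiftn]
    exact ⟨(blockSubst_mono h le_rfl (fun _ => zero_le_one) (zero_seqLe α)).trans (hd _).1,
      (hd _).2.trans (blockSubst_mono h zero_le_one hω (seqLe_one hω))⟩
  obtain ⟨c, hc, hxc⟩ := exists_eq_blockSubst h hx hinv
  have hp : p ≤ 1 := by omega
  have hshift : ∀ q, shiftn (m * q + n) d = blockSubst m a b (prevDigit p c q) (shiftn q c) := by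
    intro q
    rw [← shiftn_shiftn, hxc, shift_mul_blockSubst h.pos]
  have hlow : ∀ q, prevDigit p c q = 1 → seqLe α (shiftn q c) := by
    intro q hq
    have := (hd (m * q + n)).1
    rw [hshift, hq] at this
    exact seqLe_of_blockSubst_le h le_rfl (fun i => hc _) this
  have hupp : ∀ q, prevDigit p c q = 0 → seqLe (shiftn q c) ω := by
    intro q hq
    have := (hd (m * q + n)).2
    rw [hshift, hq] at this
    exact seqLe_of_blockSubst_le h zero_le_one hω this
  have hlow' : ∀ q, seqLe α (shiftn q c) → seqLe α (shiftn (q + 1) c) := by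
    intro q hq
    obtain h0 | h1 : c q = 0 ∨ c q = 1 := by have := hc q; omega
    · have := hq.shift 1 fun i hi => by
        rw [Nat.lt_one_iff.mp hi, hα0, shiftn, zero_add, h0]
      rw [shiftn_shiftn, add_comm] at this
      exact hα'.trans this
    · exact hlow (q + 1) h1
  have hupp' : ∀ q, seqLe (shiftn q c) ω → seqLe (shiftn (q + 1) c) ω := by
    intro q hq
    obtain h0 | h1 : c q = 0 ∨ c q = 1 := by have := hc q; omega
    · exact hupp (q + 1) h0
    · have := hq.shift 1 fun i hi => by
        rw [Nat.lt_one_iff.mp hi, hω0, shiftn, zero_add, h1]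
      rw [shiftn_shiftn, add_comm] at this
      exact this.trans hω'
  refine ⟨n, ?_⟩
  suffices hcC : c ∈ {d : ℕ → ℕ | ∃ n, shiftn n d ∈ seqBetween α ω} ∪
      {fun _ => 0} ∪ {fun _ => 1} by
    rw [hxc]
    obtain rfl | rfl : p = 0 ∨ p = 1 := by omega
    · exact Or.inl ⟨c, hcC, rfl⟩
    · exact Or.inr ⟨c, hcC, rfl⟩
  by_cases h0 : ∃ i, c i = 0
  · by_cases h1 : ∃ j, c j = 1
    · obtain ⟨i, hi⟩ := h0
      obtain ⟨j, hj⟩ := h1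
      have hl : ∀ k, seqLe α (shiftn (j + 1 + k) c) := by
        intro k
        induction k with
        | zero => exact hlow (j + 1) hj
        | succ k ih => exact hlow' _ ih
      have hu : ∀ k, seqLe (shiftn (i + 1 + k) c) ω := by
        intro k
        induction k with
        | zero => exact hupp (i + 1) hi
        | succ k ih => exact hupp' _ ih
      refine Or.inl (Or.inl ⟨i + 1 + j, fun k => ?_⟩)
      rw [shiftn_shiftn]
      constructor
      · rw [show k + (i + 1 + j) = j + 1 + (k + i) by omega]
        exact hl _
      · rw [show k + (i + 1 + j) = i + 1 + (k + j) by omega]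
        exact hu _
    · push Not at h1
      refine Or.inl (Or.inr (funext fun i => ?_))
      have := hc i
      have := h1 i
      omega
  · push Not at h0
    refine Or.inr (funext fun i => ?_)
    have := hc i
    have := h0 i
    omega

/-- The Lyndon pair of `s • r` from those of `s` and of the binary word `r`. -/
theorem IsLyndonPair.subst (h : IsLyndonPair m a b) {k : ℕ} {α ω : ℕ → ℕ}
    (h' : IsLyndonPair k α ω) (hk : 2 ≤ k) (hα : ∀ i, α i ≤ 1) :
    IsLyndonPair (m * k) (blockSubst m a b 1 α) (blockSubst m a b 0 ω) ∧
      α 0 = 0 ∧ ω 0 = 1 ∧ ∀ i, ω i ≤ 1 := by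
  obtain ⟨g, hg⟩ := h'.exists_shift
  have hω : ∀ i, ω i ≤ 1 := fun i => by rw [hg]; exact hα _
  have hαlast : α 0 < α (k - 1) := by
    obtain ⟨n, hn, -, hn'⟩ := h'.suffix_gt (j := k - 1) (by omega) (by omega)
    obtain rfl : n = 0 := by omega
    rwa [zero_add] at hn'
  have hωlast : ω (k - 1) < ω 0 := by
    obtain ⟨n, hn, -, hn'⟩ := h'.suffix_lt (j := k - 1) (by omega) (by omega)
    obtain rfl : n = 0 := by omega
    rwa [zero_add] at hn'
  have hα1 := hα (k - 1)
  have hω1 := hω 0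
  have hα0 : α 0 = 0 := by omega
  have hω0 : ω 0 = 1 := by omega
  refine ⟨?_, hα0, hω0, hω⟩
  have hg0 : g ≠ 0 := by
    rintro rfl
    rw [shiftn_zero] at hg
    rw [hg] at hω0
    omega
  have hαg : α (g - 1) = 0 := by
    have : ω (k - 1) = α (g - 1) := by
      rw [hg, shiftn, show k - 1 + g = g - 1 + k by omega, h'.periodic]
    omega
  have hmk : 0 < m * k := Nat.mul_pos h.pos h'.pos
  refine ⟨hmk, fun i => ?_, ⟨m * g, ?_⟩, fun n => ?_, fun n => ?_, fun i hi hik heq => ?_, ?_⟩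
  · have := congrFun (shift_mul_blockSubst (a := a) (b := b) h.pos 1 α k) i
    rw [shiftn, h'.shift_period] at this
    rw [this]
    congr 1
    rw [show k = k - 1 + 1 by omega]
    simp only [prevDigit]
    omega
  · rw [shift_mul_blockSubst h.pos, ← hg]
    congr 1
    rw [show g = g - 1 + 1 by omega]
    exact hαg.symm
  · exact blockSubst_le_shift h le_rfl hα hα hα0 (fun q _ => h'.min q) n
  · exact shift_le_blockSubst h zero_le_one hω hω0 (fun q _ => h'.max q) n
  · rw [shift_blockSubst_eq h.pos] at heq
    have hprev := prevDigit_le_one le_rfl hα (i / m)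
    rcases Nat.eq_zero_or_pos (i % m) with hj | hj
    · rw [hj, shiftn_zero] at heq
      obtain h0 | h1 : prevDigit 1 α (i / m) = 0 ∨ prevDigit 1 α (i / m) = 1 := by omega
      · rw [h0] at heq
        have := blockSubst_one_lt_zero_of_head_zero h hα0 (c' := shiftn (i / m) α)
        rw [heq] at this
        exact seqLt.irrefl _ this
      · rw [h1] at heq
        have hdiv : i / m < k := Nat.div_lt_of_lt_mul hik
        have hdiv0 : 0 < i / m := Nat.div_pos (Nat.le_of_dvd hi (Nat.dvd_of_mod_eq_zero hj)) h.pos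
        have hlt : seqLt α (shiftn (i / m) α) :=
          (h'.min _).resolve_left fun he => h'.primitive _ hdiv0 hdiv he.symm
        have := blockSubst_strictMono h le_rfl hα hlt
        rw [heq] at this
        exact seqLt.irrefl _ this
    · have := blockSubst_lt_shift h hprev (c := shiftn (i / m) α) (hα _) hα0 hj
        (Nat.mod_lt _ h.pos)
      rw [heq] at this
      exact seqLt.irrefl _ this
  · have hmk1 : m * k - 1 = m - 1 + m * (k - 1) := by
      obtain ⟨k', rfl⟩ : ∃ k', k = k' + 1 := ⟨k - 1, by omega⟩
      have := h.pos
      rw [Nat.add_sub_cancel, Nat.mul_succ]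
      omega
    have := congrFun (shift_mul_blockSubst (a := a) (b := b) h.pos 1 α (k - 1)) (m - 1)
    rw [shiftn] at this
    rw [hmk1, this, blockSubst_last h.pos, shiftn, zero_add]
    have := h.last
    have hprev := prevDigit_le_one le_rfl hα (k - 1)
    split_ifs <;> omega

end decoding

/-! ### Mechanical sequences -/

theorem seqLe_of_sum_le {x y : ℕ → ℕ}
    (h : ∀ n, ∑ i ∈ Finset.range n, x i ≤ ∑ i ∈ Finset.range n, y i) : seqLe x y := by
  refine seqLe_of_not_lt fun ⟨n, hn, hn'⟩ => ?_
  have hsum := h (n + 1)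
  have hpre : ∑ i ∈ Finset.range n, y i = ∑ i ∈ Finset.range n, x i :=
    Finset.sum_congr rfl fun i hi => hn i (Finset.mem_range.mp hi)
  rw [Finset.sum_range_succ, Finset.sum_range_succ] at hsum
  omega

theorem sum_le_sum_window {a d : ℕ → ℕ} (h : ∀ k, seqLe a (shiftn k d))
    (hadd : ∀ i j, ∑ l ∈ Finset.range (i + j), a l ≤
      ∑ l ∈ Finset.range i, a l + ∑ l ∈ Finset.range j, a l + 1) (n k : ℕ) :
    ∑ i ∈ Finset.range n, a i ≤ ∑ i ∈ Finset.range n, d (i + k) := by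
  induction n using Nat.strong_induction_on generalizing k with
  | _ n ih =>
    rcases h k with heq | ⟨j, hj, hj'⟩
    · rw [heq]
      rfl
    · rcases Nat.lt_or_ge j n with hjn | hjn
      · obtain ⟨r, rfl⟩ : ∃ r, n = j + 1 + r := ⟨n - (j + 1), by omega⟩
        have hr := ih r (by omega) (j + 1 + k)
        have ha := hadd (j + 1) r
        have hpre : ∑ i ∈ Finset.range j, a i = ∑ i ∈ Finset.range j, d (i + k) :=
          Finset.sum_congr rfl fun i hi => hj i (Finset.mem_range.mp hi)
        rw [Finset.sum_range_add (fun i => d (i + k)), Finset.sum_range_succ]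
        rw [Finset.sum_range_succ] at ha
        simp only [shiftn] at hj'
        have hre : ∑ i ∈ Finset.range r, d (j + 1 + i + k) =
            ∑ i ∈ Finset.range r, d (i + (j + 1 + k)) :=
          Finset.sum_congr rfl fun i _ => by congr 1; omega
        omega
      · exact (Finset.sum_congr rfl fun i hi =>
          hj i (lt_of_lt_of_le (Finset.mem_range.mp hi) hjn)).le

theorem sum_window_le_sum {b d : ℕ → ℕ} (h : ∀ k, seqLe (shiftn k d) b)
    (hadd : ∀ i j, ∑ l ∈ Finset.range i, b l + ∑ l ∈ Finset.range j, b l ≤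
      ∑ l ∈ Finset.range (i + j), b l + 1) (n k : ℕ) :
    ∑ i ∈ Finset.range n, d (i + k) ≤ ∑ i ∈ Finset.range n, b i := by
  induction n using Nat.strong_induction_on generalizing k with
  | _ n ih =>
    rcases h k with heq | ⟨j, hj, hj'⟩
    · rw [← heq]
      rfl
    · rcases Nat.lt_or_ge j n with hjn | hjn
      · obtain ⟨r, rfl⟩ : ∃ r, n = j + 1 + r := ⟨n - (j + 1), by omega⟩
        have hr := ih r (by omega) (j + 1 + k)
        have ha := hadd (j + 1) r
        have hpre : ∑ i ∈ Finset.range j, d (i + k) = ∑ i ∈ Finset.range j, b i :=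
          Finset.sum_congr rfl fun i hi => hj i (Finset.mem_range.mp hi)
        rw [Finset.sum_range_add (fun i => d (i + k)), Finset.sum_range_succ]
        rw [Finset.sum_range_succ] at ha
        simp only [shiftn] at hj'
        have hre : ∑ i ∈ Finset.range r, d (j + 1 + i + k) =
            ∑ i ∈ Finset.range r, d (i + (j + 1 + k)) :=
          Finset.sum_congr rfl fun i _ => by congr 1; omega
        omega
      · exact (Finset.sum_congr rfl fun i hi =>
          hj i (lt_of_lt_of_le (Finset.mem_range.mp hi) hjn)).le

theorem countable_periodic {q : ℕ} (hq : 0 < q) :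
    {d : ℕ → ℕ | ∀ i, d (i + q) = d i}.Countable := by
  refine (countable_range perSeq).mono ?_
  intro d hd
  refine ⟨List.ofFn fun i : Fin q => d i, ?_⟩
  have hmul : ∀ i k, d (i + q * k) = d i := by
    intro i k
    induction k with
    | zero => rfl
    | succ k ih => rw [Nat.mul_succ, ← add_assoc, hd, ih]
  funext i
  have hi : i % q < q := Nat.mod_lt i hq
  simp only [perSeq, List.length_ofFn]
  have := hmul (i % q) (i / q)
  rw [Nat.mod_add_div] at this
  simp [List.getD, hi, this]

/-- The mechanical sequence of slope `p / q` and intercept `x / q`. -/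
def mechSeq (p q x i : ℕ) : ℕ := ((i + 1) * p + x) / q - (i * p + x) / q

theorem sum_mechSeq (p q x n : ℕ) :
    ∑ i ∈ Finset.range n, mechSeq p q x i = (n * p + x) / q - x / q := by
  induction n with
  | zero => simp
  | succ n ih =>
    have h1 : x / q ≤ (n * p + x) / q := Nat.div_le_div_right (by omega)
    have h2 : (n * p + x) / q ≤ ((n + 1) * p + x) / q :=
      Nat.div_le_div_right (by nlinarith)
    rw [Finset.sum_range_succ, ih, mechSeq]
    omega

theorem sum_mechSeq_of_lt {p q x : ℕ} (hx : x < q) (n : ℕ) :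
    ∑ i ∈ Finset.range n, mechSeq p q x i = (n * p + x) / q := by
  rw [sum_mechSeq, Nat.div_eq_of_lt hx, Nat.sub_zero]

theorem shift_mechSeq (p q x n : ℕ) : shiftn n (mechSeq p q x) = mechSeq p q (x + n * p) := by
  funext i
  simp only [shiftn, mechSeq]
  congr 2 <;> ring

theorem mechSeq_add {q : ℕ} (hq : 0 < q) (p x k : ℕ) :
    mechSeq p q (x + k * q) = mechSeq p q x := by
  funext i
  simp only [mechSeq, ← add_assoc, Nat.add_mul_div_right _ _ hq]
  omega

theorem mechSeq_mod {q : ℕ} (hq : 0 < q) (p x : ℕ) : mechSeq p q (x % q) = mechSeq p q x := by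
  conv_rhs => rw [← Nat.mod_add_div' x q, mechSeq_add hq]

theorem mechSeq_mono {p q x y : ℕ} (hxy : x ≤ y) (hy : y < q) :
    seqLe (mechSeq p q x) (mechSeq p q y) := by
  refine seqLe_of_sum_le fun n => ?_
  rw [sum_mechSeq_of_lt hy, sum_mechSeq_of_lt (hxy.trans_lt hy)]
  exact Nat.div_le_div_right (by omega)

/-- Sequences with all shifts between the extremal mechanical sequences of a rational slope are
periodic. -/
theorem countable_seqBetween_mechSeq {p q : ℕ} (hq : 0 < q) :
    (seqBetween (mechSeq p q 0) (mechSeq p q (q - 1))).Countable := by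
  refine (countable_periodic hq).mono ?_
  intro d hd k
  have hA : ∀ i j : ℕ, (i + j) * p / q ≤ i * p / q + j * p / q + 1 := by
    intro i j
    rw [add_mul]
    have h1 := Nat.div_add_mod (i * p) q
    have h2 := Nat.div_add_mod (j * p) q
    have h3 := Nat.mod_lt (i * p) hq
    have h4 := Nat.mod_lt (j * p) hq
    refine Nat.le_of_lt_succ ((Nat.div_lt_iff_lt_mul hq).mpr ?_)
    nlinarith
  have hB : ∀ i j : ℕ, (i * p + (q - 1)) / q + (j * p + (q - 1)) / q ≤
      ((i + j) * p + (q - 1)) / q + 1 := by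
    intro i j
    have h1 := Nat.div_mul_le_self (i * p + (q - 1)) q
    have h2 := Nat.div_mul_le_self (j * p + (q - 1)) q
    rw [← Nat.add_div_right _ hq, Nat.le_div_iff_mul_le hq, add_mul, add_mul]
    omega
  have hlow := fun k => sum_le_sum_window (fun k => (hd k).1)
    (fun i j => by simpa only [sum_mechSeq_of_lt hq, add_zero] using hA i j) q k
  have hupp := fun k => sum_window_le_sum (fun k => (hd k).2)
    (fun i j => by
      simpa only [sum_mechSeq_of_lt (Nat.sub_lt hq one_pos)] using hB i j) q k
  simp only [sum_mechSeq_of_lt hq, sum_mechSeq_of_lt (Nat.sub_lt hq one_pos), add_zero,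
    Nat.mul_div_cancel_left p hq] at hlow hupp
  have hq1 : (q * p + (q - 1)) / q = p := by
    rw [Nat.mul_add_div hq, Nat.div_eq_of_lt (by omega), add_zero]
  rw [hq1] at hupp
  have h1 := (hlow k).antisymm (hupp k)
  have h2 := (hlow (k + 1)).antisymm (hupp (k + 1))
  obtain ⟨r, rfl⟩ : ∃ r, q = r + 1 := ⟨q - 1, by omega⟩
  rw [Finset.sum_range_succ'] at h1
  rw [Finset.sum_range_succ] at h2
  have hre : ∑ i ∈ Finset.range r, d (i + 1 + k) = ∑ i ∈ Finset.range r, d (i + (k + 1)) :=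
    Finset.sum_congr rfl fun i _ => by congr 1; omega
  rw [zero_add] at h1
  rw [show k + (r + 1) = r + (k + 1) by omega]
  omega

theorem isLyndonPair_mechSeq {p q : ℕ} (hp : 0 < p) (hq : 0 < q) (hpq : p.Coprime q) :
    IsLyndonPair q (mechSeq p q 0) (mechSeq p q (q - 1)) := by
  obtain ⟨g, hg⟩ : ∃ g, g * p % q = q - 1 := by
    obtain ⟨g, -, hg⟩ := Nat.exists_mul_mod_eq_of_coprime (q - 1) hpq hq.ne'
    exact ⟨g, by rw [mul_comm, hg, Nat.mod_eq_of_lt (by omega)]⟩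
  refine ⟨hq, fun i => ?_, ⟨g, ?_⟩, fun n => ?_, fun n => ?_, fun i hi hiq heq => ?_, ?_⟩
  · have := congrFun (shift_mechSeq p q 0 q) i
    rw [shiftn, mul_comm, mechSeq_add hq] at this
    exact this
  · rw [shift_mechSeq, zero_add, ← mechSeq_mod hq, ← mechSeq_mod hq p (g * p), hg,
      Nat.mod_eq_of_lt (by omega)]
  · rw [shift_mechSeq, ← mechSeq_mod hq p (0 + _)]
    exact mechSeq_mono (Nat.zero_le _) (Nat.mod_lt _ hq)
  · rw [shift_mechSeq, ← mechSeq_mod hq p (_ + _)]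
    exact mechSeq_mono (Nat.le_pred_of_lt (Nat.mod_lt _ hq)) (by omega)
  · rw [shift_mechSeq, zero_add, ← mechSeq_mod hq p (i * p)] at heq
    have hne : i * p % q ≠ 0 := fun h0 =>
      Nat.not_dvd_of_pos_of_lt hi hiq (hpq.symm.dvd_of_dvd_mul_right (Nat.dvd_of_mod_eq_zero h0))
    have hlt := Nat.mod_lt (i * p) hq
    have hsum := sum_mechSeq_of_lt (p := p) hlt g
    rw [heq, sum_mechSeq_of_lt hq, add_zero] at hsum
    have hdiv := Nat.div_add_mod (g * p) q
    have : g * p / q + 1 ≤ (g * p + i * p % q) / q := by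
      rw [Nat.le_div_iff_mul_le hq, add_mul, mul_comm]
      omega
    omega
  · rw [mechSeq, Nat.sub_add_cancel hq, add_zero, add_zero, Nat.mul_div_cancel_left p hq]
    have : (q - 1) * p / q < p := by
      rw [Nat.div_lt_iff_lt_mul hq, mul_comm p q]
      exact Nat.mul_lt_mul_of_pos_right (by omega) hp
    omega

/-! ### Farey words -/

/-- The Christoffel word of slope `p / q`. -/
def mechWord (p q : ℕ) : List ℕ := (List.range q).map (mechSeq p q 0)

theorem length_mechWord (p q : ℕ) : (mechWord p q).length = q := by simp [mechWord]

theorem getD_map_range (c : ℕ → ℕ) {q i : ℕ} (hi : i < q) :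
    ((List.range q).map c).getD i 0 = c i := by
  simp [List.getD, hi]

theorem perSeq_mechWord {q : ℕ} (hq : 0 < q) (p : ℕ) :
    perSeq (mechWord p q) = mechSeq p q 0 := by
  funext i
  simp only [perSeq, length_mechWord]
  rw [mechWord, getD_map_range _ (Nat.mod_lt i hq)]
  have h : mechSeq p q 0 (i % q) = shiftn (q * (i / q)) (mechSeq p q 0) (i % q) := by
    rw [shift_mechSeq, mul_comm q, mul_right_comm, mechSeq_add hq]
  rw [h, shiftn, Nat.mod_add_div]

theorem mechWord_append {p q p' q' : ℕ} (hq : 0 < q) (hq' : 0 < q')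
    (hdet : p' * q = p * q' + 1) :
    mechWord (p + p') (q + q') = mechWord p q ++ mechWord p' q' := by
  have hfst : ∀ n ≤ q, n * (p + p') / (q + q') = n * p / q := fun n hn => by
    have h1 := Nat.div_mul_le_self (n * p) q
    have h2 := Nat.lt_div_mul_add (a := n * p) hq
    refine Nat.div_eq_of_lt_le ?_ ?_
    · refine Nat.le_of_mul_le_mul_left ?_ hq
      generalize n * p / q = k at *
      nlinarith
    · refine Nat.lt_of_mul_lt_mul_left (a := q) ?_
      generalize n * p / q = k at *
      have : n * p + 1 ≤ k * q + q := h2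
      nlinarith
  have hsnd : ∀ n ≤ q', (q + n) * (p + p') / (q + q') = p + n * p' / q' := fun n hn => by
    have h1 := Nat.div_mul_le_self (n * p') q'
    have h2 := Nat.lt_div_mul_add (a := n * p') hq'
    refine Nat.div_eq_of_lt_le ?_ ?_
    · refine Nat.le_of_mul_le_mul_left ?_ hq'
      generalize n * p' / q' = k at *
      nlinarith
    · refine Nat.lt_of_mul_lt_mul_left (a := q') ?_
      generalize n * p' / q' = k at *
      have : n * p' + 1 ≤ k * q' + q' := h2
      nlinarith
  rw [mechWord, List.range_add, List.map_append, List.map_map]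
  congr 1
  · refine List.map_congr_left fun i hi => ?_
    rw [List.mem_range] at hi
    simp only [mechSeq, add_zero]
    rw [hfst _ hi.le, hfst _ hi]
  · refine List.map_congr_left fun i hi => ?_
    rw [List.mem_range] at hi
    simp only [mechSeq, add_zero, Function.comp]
    rw [hsnd _ hi.le, add_assoc, hsnd _ hi, Nat.add_sub_add_left]

/-- Christoffel words of Farey neighbours. -/
def FareyPair (u v : List ℕ) : Prop :=
  ∃ p q p' q' : ℕ, p < q ∧ 0 < q' ∧ p' ≤ q' ∧ p' * q = p * q' + 1 ∧
    u = mechWord p q ∧ v = mechWord p' q'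

theorem FareyPair.append {u v : List ℕ} (h : FareyPair u v) :
    FareyPair u (u ++ v) ∧ FareyPair (u ++ v) v := by
  obtain ⟨p, q, p', q', hpq, hq', hpq', hdet, rfl, rfl⟩ := h
  rw [← mechWord_append (by omega) hq' hdet]
  exact ⟨⟨p, q, p + p', q + q', hpq, by omega, by omega, by linarith, rfl, rfl⟩,
    ⟨p + p', q + q', p', q', by omega, hq', hpq', by linarith, rfl, rfl⟩⟩

theorem FareyPair.exists_mechWord {u v : List ℕ} (h : FareyPair u v) :
    ∃ p q, 0 < p ∧ p < q ∧ p.Coprime q ∧ u ++ v = mechWord p q := by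
  obtain ⟨p, q, p', q', hpq, hq', hpq', hdet, rfl, rfl⟩ := h
  refine ⟨p + p', q + q', ?_, by omega, ?_, (mechWord_append (by omega) hq' hdet).symm⟩
  · rcases Nat.eq_zero_or_pos p' with rfl | h0 <;> omega
  · have h1 : (p + p').gcd (q + q') ∣ p' * (q + q') :=
      dvd_mul_of_dvd_right (Nat.gcd_dvd_right _ _) _
    have h2 : (p + p').gcd (q + q') ∣ (p + p') * q' := dvd_mul_of_dvd_left (Nat.gcd_dvd_left _ _) _
    have h3 : p' * (q + q') = (p + p') * q' + 1 := by linarith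
    rw [h3] at h1
    exact Nat.dvd_one.1 ((Nat.dvd_add_right h2).1 h1)

theorem isChain_fareyInsert {l : List (List ℕ)} (h : l.IsChain FareyPair) :
    (fareyInsert l).IsChain FareyPair := by
  induction l using fareyInsert.induct with
  | case1 => simp [fareyInsert]
  | case2 w => simp [fareyInsert]
  | case3 w v rest ih =>
    rw [List.isChain_cons_cons] at h
    have hw := h.1.append
    have ih := ih h.2
    rw [fareyInsert, List.isChain_cons_cons]
    refine ⟨hw.1, ?_⟩
    rcases rest with _ | ⟨z, rest⟩
    · simpa [fareyInsert] using hw.2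
    · rw [fareyInsert] at ih ⊢
      rw [List.isChain_cons_cons]
      exact ⟨hw.2, ih⟩

theorem isChain_fareyLevel (n : ℕ) : (fareyLevel n).IsChain FareyPair := by
  induction n with
  | zero =>
    simp only [fareyLevel, List.isChain_cons_cons, List.isChain_singleton, and_true]
    exact ⟨0, 1, 1, 1, by decide⟩
  | succ n ih => exact isChain_fareyInsert ih

theorem mem_fareyInsert {l : List (List ℕ)} (h : l.IsChain FareyPair) {w : List ℕ}
    (hw : w ∈ fareyInsert l) : w ∈ l ∨ ∃ u v, FareyPair u v ∧ w = u ++ v := by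
  induction l using fareyInsert.induct with
  | case1 => simp [fareyInsert] at hw
  | case2 u => exact .inl (by simpa [fareyInsert] using hw)
  | case3 u v rest ih =>
    rw [List.isChain_cons_cons] at h
    rw [fareyInsert, List.mem_cons, List.mem_cons] at hw
    rcases hw with rfl | rfl | hw
    · exact .inl (by simp)
    · exact .inr ⟨u, v, h.1, rfl⟩
    · exact (ih h.2 hw).imp_left fun h => List.mem_cons_of_mem _ h

theorem FareySet.exists_mechWord {w : List ℕ} (hw : w ∈ FareySet) :
    ∃ p q, 0 < p ∧ p < q ∧ p.Coprime q ∧ w = mechWord p q := by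
  obtain ⟨⟨n, hn⟩, h0, h1⟩ := hw
  induction n with
  | zero => simp [fareyLevel, h0, h1] at hn
  | succ n ih =>
    rcases mem_fareyInsert (isChain_fareyLevel n) hn with h | ⟨u, v, h, rfl⟩
    · exact ih h
    · exact h.exists_mechWord

theorem iterate_theta_mechWord {p q : ℕ} (hq : 0 < q) (k : ℕ) :
    theta^[k] (mechWord p q) = mechWord (p + k * q) q := by
  induction k with
  | zero => simp
  | succ k ih =>
    rw [Function.iterate_succ_apply', ih, theta, mechWord, List.map_map, mechWord]
    refine List.map_congr_left fun i _ => ?_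
    have h : ∀ j : ℕ, j * (p + (k + 1) * q) / q = j * (p + k * q) / q + j := fun j => by
      rw [show j * (p + (k + 1) * q) = j * (p + k * q) + j * q by ring,
        Nat.add_mul_div_right _ _ hq]
    have hmono : i * (p + k * q) / q ≤ (i + 1) * (p + k * q) / q :=
      Nat.div_le_div_right (Nat.mul_le_mul_right _ (by omega))
    simp only [mechSeq, add_zero, Function.comp, h]
    omega

theorem FareyExt.exists_mechWord {w : List ℕ} (hw : w ∈ FareyExt) :
    ∃ p q, 0 < p ∧ 0 < q ∧ p.Coprime q ∧ w = mechWord p q := by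
  obtain ⟨v, hv, k, rfl⟩ := hw
  obtain ⟨p, q, hp, hq, hpq, rfl⟩ : ∃ p q, 0 < p ∧ 0 < q ∧ p.Coprime q ∧ v = mechWord p q := by
    rcases hv with hv | rfl
    · obtain ⟨p, q, hp, hpq, hc, rfl⟩ := FareySet.exists_mechWord hv
      exact ⟨p, q, hp, by omega, hc, rfl⟩
    · exact ⟨1, 1, by decide⟩
  exact ⟨p + k * q, q, by omega, hq, by simpa using hpq, iterate_theta_mechWord hq k⟩

/-! ### From words to sequences -/

theorem perSeq_of_lt {w : List ℕ} {i : ℕ} (hi : i < w.length) : perSeq w i = w.getD i 0 := by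
  rw [perSeq, Nat.mod_eq_of_lt hi]

theorem perSeq_rotate (w : List ℕ) (n : ℕ) : perSeq (w.rotate n) = shiftn n (perSeq w) := by
  funext i
  simp only [perSeq, shiftn, List.length_rotate]
  rcases Nat.eq_zero_or_pos w.length with h | h
  · simp [List.length_eq_zero_iff.1 h]
  · have h1 : i % w.length < w.length := Nat.mod_lt _ h
    rw [List.getD, List.getElem?_rotate h1, Nat.mod_add_mod, List.getD]

theorem seqLe_perSeq {v w : List ℕ} (hlen : v.length = w.length) (h : v ≤ w) :
    seqLe (perSeq v) (perSeq w) := by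
  rcases h.eq_or_lt with rfl | h
  · exact seqLe.refl _
  · rcases List.lt_iff_exists.1 h with ⟨-, h⟩ | ⟨i, h1, h2, hj, hi⟩
    · omega
    · refine .inr ⟨i, fun j hji => ?_, ?_⟩
      · rw [perSeq_of_lt (hji.trans h1), perSeq_of_lt (hji.trans h2)]
        simpa [hji.trans h1, hji.trans h2] using hj j hji
      · rw [perSeq_of_lt h1, perSeq_of_lt h2]
        simpa [h1, h2] using hi

theorem foldl_max_mem {α : Type*} [LinearOrder α] (l : List α) (x : α) :
    l.foldl max x = x ∨ l.foldl max x ∈ l := by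
  induction l generalizing x with
  | nil => exact .inl rfl
  | cons y l ih =>
    rw [List.foldl_cons, List.mem_cons]
    rcases ih (max x y) with h | h
    · rw [h]
      rcases max_choice x y with h' | h' <;> simp [h']
    · exact .inr (.inr h)

theorem le_foldl_max {α : Type*} [LinearOrder α] (l : List α) (x : α) :
    x ≤ l.foldl max x ∧ ∀ y ∈ l, y ≤ l.foldl max x := by
  induction l generalizing x with
  | nil => simp
  | cons y l ih =>
    have h := ih (max x y)
    rw [List.foldl_cons]
    refine ⟨(le_max_left x y).trans h.1, ?_⟩
    simp only [List.mem_cons, forall_eq_or_imp]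
    exact ⟨(le_max_right x y).trans h.1, h.2⟩

theorem maxCyc_eq_rotate {w : List ℕ} (hw : w ≠ []) : ∃ n, maxCyc w = w.rotate n := by
  have hlen : 0 < w.length := List.length_pos_iff.2 hw
  rcases foldl_max_mem ((List.range w.length).map w.rotate) [] with h | h
  · have hle := (le_foldl_max ((List.range w.length).map w.rotate) []).2 w
      (List.mem_map.2 ⟨0, List.mem_range.2 hlen, w.rotate_zero⟩)
    rw [h] at hle
    exact absurd hle (not_le.2 (List.lt_iff_exists.2 (.inl ⟨by simp, by simpa using hlen⟩)))
  · obtain ⟨n, -, hn⟩ := List.mem_map.1 h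
    exact ⟨n, hn.symm⟩

theorem rotate_le_maxCyc {w : List ℕ} (hw : w ≠ []) (n : ℕ) : w.rotate n ≤ maxCyc w := by
  rw [← List.rotate_mod]
  exact (le_foldl_max _ _).2 _ (List.mem_map.2
    ⟨n % w.length, List.mem_range.2 (Nat.mod_lt _ (List.length_pos_iff.2 hw)), rfl⟩)

theorem length_maxCyc (w : List ℕ) : (maxCyc w).length = w.length := by
  by_cases hw : w = []
  · simp [hw, maxCyc]
  · obtain ⟨n, hn⟩ := maxCyc_eq_rotate hw
    rw [hn, List.length_rotate]

theorem length_wplus {w : List ℕ} (hw : 0 < w.length) : (wplus w).length = w.length := by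
  simp only [wplus, List.length_append, List.length_dropLast, List.length_singleton]
  omega

theorem length_wminus {w : List ℕ} (hw : 0 < w.length) : (wminus w).length = w.length := by
  simp only [wminus, List.length_append, List.length_dropLast, List.length_singleton]
  omega

theorem getLast!_eq_getD (w : List ℕ) : w.getLast! = w.getD (w.length - 1) 0 := by
  rcases w.eq_nil_or_concat with rfl | ⟨v, x, rfl⟩ <;> simp

theorem getD_dropLast_append {w : List ℕ} {i : ℕ} (hi : i < w.length) (x : ℕ) :
    (w.dropLast ++ [x]).getD i 0 = if i = w.length - 1 then x else w.getD i 0 := by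
  split_ifs with h
  · rw [List.getD_append_right _ _ _ _ (by simp [h])]
    simp [h]
  · rw [List.getD_append _ _ _ _ (by simp; omega)]
    simp only [List.getD, List.getElem?_dropLast]
    rw [if_pos (by omega)]

namespace IsLyndonPair

variable {S : List ℕ} {b : ℕ → ℕ}

theorem perSeq_maxCyc (h : IsLyndonPair S.length (perSeq S) b) : perSeq (maxCyc S) = b := by
  have hS : S ≠ [] := List.length_pos_iff.1 h.pos
  refine seqLe.antisymm ?_ ?_
  · obtain ⟨n, hn⟩ := maxCyc_eq_rotate hS
    rw [hn, perSeq_rotate]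
    exact h.shift_le_right n
  · obtain ⟨g, hg⟩ := h.exists_shift
    conv_lhs => rw [hg, ← perSeq_rotate]
    exact seqLe_perSeq (by rw [List.length_rotate, length_maxCyc]) (rotate_le_maxCyc hS g)

theorem length_phiBlock (h : IsLyndonPair S.length (perSeq S) b) (p d : ℕ) :
    (phiBlock S p d).length = S.length := by
  have hL : 0 < (maxCyc S).length := (length_maxCyc S).symm ▸ h.pos
  unfold phiBlock
  split_ifs <;> simp [length_maxCyc, length_wplus hL, length_wminus h.pos]

theorem getD_phiBlock (h : IsLyndonPair S.length (perSeq S) b) {p d : ℕ} (hp : p ≤ 1) (hd : d ≤ 1)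
    {c : ℕ → ℕ} (hc : c 0 = d) {i : ℕ} (hi : i < S.length) :
    (phiBlock S p d).getD i 0 = blockSubst S.length (perSeq S) b p c i := by
  have hL : i < (maxCyc S).length := (length_maxCyc S).symm ▸ hi
  have hSi : S.getD i 0 = perSeq S i := (perSeq_of_lt hi).symm
  have hLi : (maxCyc S).getD i 0 = b i := by rw [← perSeq_of_lt hL, h.perSeq_maxCyc]
  have hdiv : i / S.length = 0 := Nat.div_eq_of_lt hi
  have hmod : i % S.length = i := Nat.mod_eq_of_lt hi
  subst hc
  simp only [blockSubst, hdiv, hmod, prevDigit]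
  unfold phiBlock
  split_ifs with h1 h2 h3 h4 h5 h6 <;>
    simp only [wplus, wminus, getD_dropLast_append hi, getD_dropLast_append hL, hSi, hLi,
      getLast!_eq_getD, length_maxCyc] <;>
    subst_vars <;> simp_all <;> omega

theorem length_phiAux (h : IsLyndonPair S.length (perSeq S) b) (p : ℕ) (r : List ℕ) :
    (phiAux S p r).length = S.length * r.length := by
  induction r generalizing p with
  | nil => rfl
  | cons d r ih =>
    rw [phiAux, List.length_append, h.length_phiBlock, ih, List.length_cons]
    ring

theorem getD_phiAux (h : IsLyndonPair S.length (perSeq S) b) {p : ℕ} (hp : p ≤ 1) {r : List ℕ}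
    {c : ℕ → ℕ} (hc : ∀ j < r.length, c j = r.getD j 0 ∧ c j ≤ 1) {i : ℕ}
    (hi : i < S.length * r.length) :
    (phiAux S p r).getD i 0 = blockSubst S.length (perSeq S) b p c i := by
  induction r generalizing p c i with
  | nil => simp at hi
  | cons d r ih =>
    have hd := hc 0 (by simp)
    simp only [List.getD_cons_zero] at hd
    rw [phiAux]
    rcases lt_or_ge i S.length with his | his
    · rw [List.getD_append _ _ _ _ (by rwa [h.length_phiBlock]),
        h.getD_phiBlock hp (hd.1 ▸ hd.2) hd.1 his]
    · rw [List.getD_append_right _ _ _ _ (by rwa [h.length_phiBlock]), h.length_phiBlock,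
        ih (p := d) (c := shiftn 1 c) (hd.1 ▸ hd.2) ?_ ?_]
      · conv_rhs => rw [← Nat.sub_add_cancel his, blockSubst_add h.pos, hd.1]
      · intro j hj
        simpa [shiftn] using hc (j + 1) (by simpa using hj)
      · rw [List.length_cons, Nat.mul_succ] at hi
        omega

theorem wordSeq_wminus (h : IsLyndonPair S.length (perSeq S) b) :
    wordSeq (wminus S) (perSeq (maxCyc S)) =
      blockSubst S.length (perSeq S) b 1 (fun _ => 0) := by
  funext i
  have hblock : wminus S = phiBlock S 1 0 := by simp [phiBlock]
  rw [wordSeq, length_wminus h.pos, h.perSeq_maxCyc]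
  split_ifs with hi
  · rw [hblock, h.getD_phiBlock (c := fun _ => 0) le_rfl zero_le_one rfl hi]
  · conv_rhs => rw [← Nat.sub_add_cancel (not_lt.1 hi), blockSubst_add h.pos]
    exact (congrFun (blockSubst_const_zero h) _).symm

theorem wordSeq_wplus_wminus (h : IsLyndonPair S.length (perSeq S) b) :
    wordSeq (wplus (maxCyc S) ++ wminus S) (perSeq (maxCyc S)) =
      blockSubst S.length (perSeq S) b 0 (fun i => if i = 0 then 1 else 0) := by
  funext i
  have hblock : wplus (maxCyc S) = phiBlock S 0 1 := by simp [phiBlock]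
  have hlen : (wplus (maxCyc S)).length = S.length := by rw [hblock, h.length_phiBlock]
  rcases lt_or_ge i S.length with hi | hi
  · rw [wordSeq, if_pos (by rw [List.length_append]; omega),
      List.getD_append _ _ _ _ (by omega), hblock,
      h.getD_phiBlock (c := fun i => if i = 0 then 1 else 0) zero_le_one le_rfl rfl hi]
  · conv_rhs => rw [← Nat.sub_add_cancel hi, blockSubst_add h.pos]
    have hsub : wordSeq (wplus (maxCyc S) ++ wminus S) (perSeq (maxCyc S)) i =
        wordSeq (wminus S) (perSeq (maxCyc S)) (i - S.length) := by
      simp only [wordSeq, List.length_append, hlen]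
      by_cases h2 : i - S.length < (wminus S).length
      · rw [if_pos h2, if_pos (by omega), List.getD_append_right _ _ _ _ (by omega), hlen]
      · rw [if_neg h2, if_neg (by omega), Nat.sub_sub]
    rw [hsub, h.wordSeq_wminus]
    rfl

end IsLyndonPair

/-- A word `S` such that `(S^∞, L(S)^∞)` is a Lyndon pair between which only countably many
sequences stay under all shifts. -/
def IsBalancedWord (S : List ℕ) : Prop :=
  ∃ b, IsLyndonPair S.length (perSeq S) b ∧ (seqBetween (perSeq S) b).Countable

theorem isBalancedWord_mechWord {p q : ℕ} (hp : 0 < p) (hq : 0 < q) (hpq : p.Coprime q) :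
    IsBalancedWord (mechWord p q) := by
  rw [IsBalancedWord, length_mechWord, perSeq_mechWord hq]
  exact ⟨_, isLyndonPair_mechSeq hp hq hpq, countable_seqBetween_mechSeq hq⟩

theorem mechSeq_le_one {p q : ℕ} (hpq : p < q) (x i : ℕ) : mechSeq p q x i ≤ 1 := by
  have h : ((i + 1) * p + x) / q ≤ (i * p + x) / q + 1 := by
    rw [← Nat.add_div_right _ (by omega)]
    exact Nat.div_le_div_right (by linarith)
  rw [mechSeq]
  omega

theorem isBalancedWord_subst {S r : List ℕ} (hS : IsBalancedWord S) (hr : r ∈ FareySet) :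
    IsBalancedWord (subst S r) := by
  obtain ⟨b, h, hab⟩ := hS
  obtain ⟨p, q, hp, hpq, hc, rfl⟩ := FareySet.exists_mechWord hr
  have hq : 0 < q := by omega
  have hbin : ∀ i, mechSeq p q 0 i ≤ 1 := mechSeq_le_one hpq 0
  have h' := isLyndonPair_mechSeq hp hq hc
  obtain ⟨hpair, hα0, hω0, hω⟩ := IsLyndonPair.subst h h' (by omega) hbin
  have hsubst : subst S (mechWord p q) = phiAux S 1 (mechWord p q) := by
    obtain ⟨k, rfl⟩ : ∃ k, q = k + 1 := ⟨q - 1, by omega⟩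
    rw [mechWord, List.range_succ_eq_map, List.map_cons, hα0]
    rfl
  have hlen : (subst S (mechWord p q)).length = S.length * q := by
    rw [hsubst, h.length_phiAux, length_mechWord]
  have hseq : perSeq (subst S (mechWord p q)) =
      blockSubst S.length (perSeq S) b 1 (mechSeq p q 0) := by
    funext i
    have hi : i % (S.length * q) < S.length * q := Nat.mod_lt _ hpair.pos
    rw [perSeq, hlen, hsubst, h.getD_phiAux le_rfl (c := mechSeq p q 0) ?_
      (by rwa [length_mechWord]), hpair.mod_period]
    intro j hj
    rw [length_mechWord] at hj
    exact ⟨(getD_map_range _ hj).symm, hbin j⟩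
  rw [IsBalancedWord, hlen, hseq]
  exact ⟨_, hpair, countable_seqBetween_blockSubst h hab hω hα0 hω0 (h'.min 1) (h'.max 1)
    (countable_seqBetween_mechSeq hq)⟩

theorem isBalancedWord_of_mem_lambdaExt {S : List ℕ} (hS : S ∈ LambdaExt) :
    IsBalancedWord S := by
  simp only [LambdaExt, mem_iUnion] at hS
  obtain ⟨-, -, s, hs, rs, -, hrs, rfl⟩ := hS
  obtain ⟨p, q, hp, hq, hpq, rfl⟩ := FareyExt.exists_mechWord hs
  have h := isBalancedWord_mechWord hp hq hpq
  clear hs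
  generalize mechWord p q = s at *
  induction rs generalizing s with
  | nil => exact h
  | cons r rs ih =>
    exact ih (fun r' hr' => hrs r' (List.mem_cons_of_mem _ hr')) _
      (isBalancedWord_subst h (hrs r List.mem_cons_self))

/-! ### Values of digit sequences -/

section ValSeq

variable {β : ℝ} {B : ℕ} {c x y z : ℕ → ℕ}

theorem summable_const_div_pow (hβ : 1 < β) (C : ℝ) :
    Summable fun i : ℕ => C / β ^ (i + 1) := by
  have h := ((summable_geometric_of_lt_one (inv_nonneg.2 (zero_le_one.trans hβ.le))
    (inv_lt_one_of_one_lt₀ hβ)).mul_left (C / β))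
  refine h.congr fun i => ?_
  rw [inv_pow, pow_succ']
  have : β ≠ 0 := by positivity
  field_simp

theorem tsum_const_div_pow (hβ : 1 < β) (C : ℝ) :
    ∑' i : ℕ, C / β ^ (i + 1) = C / (β - 1) := by
  have h0 : 0 < β := zero_lt_one.trans hβ
  have h : ∀ i : ℕ, C / β ^ (i + 1) = C / β * (β⁻¹) ^ i := fun i => by
    rw [inv_pow, pow_succ']
    field_simp
  simp_rw [h]
  rw [tsum_mul_left, tsum_geometric_of_lt_one (inv_nonneg.2 h0.le) (inv_lt_one_of_one_lt₀ hβ)]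
  have : β - 1 ≠ 0 := by linarith
  field_simp

theorem summable_valSeq (hβ : 1 < β) (hc : ∀ i, c i ≤ B) :
    Summable fun i : ℕ => (c i : ℝ) / β ^ (i + 1) := by
  have h0 : 0 < β := zero_lt_one.trans hβ
  refine Summable.of_nonneg_of_le (fun i => by positivity) (fun i => ?_)
    (summable_const_div_pow hβ B)
  have := hc i
  gcongr

theorem valSeq_nonneg (hβ : 1 < β) (c : ℕ → ℕ) : 0 ≤ valSeq β c := by
  have h0 : 0 < β := zero_lt_one.trans hβ
  exact tsum_nonneg fun i => by positivity

theorem valSeq_le (hβ : 1 < β) (hc : ∀ i, c i ≤ B) : valSeq β c ≤ B / (β - 1) := by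
  have h0 : 0 < β := zero_lt_one.trans hβ
  rw [← tsum_const_div_pow hβ]
  refine (summable_valSeq hβ hc).tsum_le_tsum (fun i => ?_) (summable_const_div_pow hβ B)
  have := hc i
  gcongr

theorem valSeq_pos (hβ : 1 < β) (hc : ∀ i, c i ≤ B) {i : ℕ} (hi : 0 < c i) : 0 < valSeq β c := by
  have h0 : 0 < β := zero_lt_one.trans hβ
  exact (summable_valSeq hβ hc).tsum_pos (fun i => by positivity) i (by positivity)

theorem valSeq_eq_sum_add (hβ : 1 < β) (hc : ∀ i, c i ≤ B) (n : ℕ) :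
    valSeq β c = ∑ i ∈ Finset.range n, (c i : ℝ) / β ^ (i + 1) +
      valSeq β (shiftn n c) / β ^ n := by
  have h0 : 0 < β := zero_lt_one.trans hβ
  rw [valSeq, ← (summable_valSeq hβ hc).sum_add_tsum_nat_add n, valSeq, ← tsum_div_const]
  congr 2
  funext i
  rw [shiftn, div_div, ← pow_add]
  congr 2
  ring

theorem valSeq_eq_head_add (hβ : 1 < β) (hc : ∀ i, c i ≤ B) :
    β * valSeq β c = c 0 + valSeq β (shiftn 1 c) := by
  have h0 : 0 < β := zero_lt_one.trans hβ
  rw [valSeq_eq_sum_add hβ hc 1]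
  simp only [Finset.range_one, Finset.sum_singleton, zero_add, pow_one]
  field_simp

theorem valSeq_anti {β' : ℝ} (hβ : 1 < β) (hββ' : β ≤ β') (hc : ∀ i, c i ≤ B) :
    valSeq β' c ≤ valSeq β c := by
  have h0 : 0 < β := zero_lt_one.trans hβ
  refine (summable_valSeq (hβ.trans_le hββ') hc).tsum_le_tsum (fun i => ?_) (summable_valSeq hβ hc)
  gcongr

/-- Two sequences agreeing on their first `n` digits have values at distance at most
`β⁻ⁿ` times the distance of the values of the tails. -/
theorem valSeq_sub_valSeq (hβ : 1 < β) (hx : ∀ i, x i ≤ B) (hy : ∀ i, y i ≤ B) {n : ℕ}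
    (h : ∀ i < n, x i = y i) :
    valSeq β x - valSeq β y = (valSeq β (shiftn n x) - valSeq β (shiftn n y)) / β ^ n := by
  have hsum : ∑ i ∈ Finset.range n, (x i : ℝ) / β ^ (i + 1) =
      ∑ i ∈ Finset.range n, (y i : ℝ) / β ^ (i + 1) :=
    Finset.sum_congr rfl fun i hi => by rw [h i (Finset.mem_range.1 hi)]
  rw [valSeq_eq_sum_add hβ hx n, valSeq_eq_sum_add hβ hy n, hsum]
  ring

theorem le_valSeq_sub_of_lt (hβ : 1 < β) (hx : ∀ i, x i ≤ B) (hy : ∀ i, y i ≤ B) {n : ℕ}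
    (h : ∀ i < n, x i = y i) (hn : x n < y n) :
    (1 + valSeq β (shiftn (n + 1) y) - valSeq β (shiftn (n + 1) x)) / β ^ (n + 1) ≤
      valSeq β y - valSeq β x := by
  have h0 : 0 < β := zero_lt_one.trans hβ
  rw [valSeq_sub_valSeq hβ hy hx fun i hi => (h i hi).symm, pow_succ', ← div_div]
  gcongr
  have h1 := valSeq_eq_head_add hβ (c := shiftn n x) fun i => hx _
  have h2 := valSeq_eq_head_add hβ (c := shiftn n y) fun i => hy _
  rw [shiftn_shiftn, add_comm 1 n] at h1 h2
  have h3 : (shiftn n x 0 : ℝ) + 1 ≤ shiftn n y 0 := by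
    simp only [shiftn, zero_add]
    exact_mod_cast hn
  rw [div_le_iff₀ h0]
  linarith

theorem valSeq_lt_of_seqLt (hβ : 1 < β) (hx : ∀ i, x i ≤ B) (hy : ∀ i, y i ≤ B)
    (htail : ∀ n, valSeq β (shiftn n x) < 1) (h : seqLt x y) : valSeq β x < valSeq β y := by
  obtain ⟨n, hn, hn'⟩ := h
  have h0 : 0 < β := zero_lt_one.trans hβ
  have h1 := le_valSeq_sub_of_lt hβ hx hy hn hn'
  have h2 := htail (n + 1)
  have h3 := valSeq_nonneg hβ (shiftn (n + 1) y)
  have : 0 < (1 + valSeq β (shiftn (n + 1) y) - valSeq β (shiftn (n + 1) x)) / β ^ (n + 1) :=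
    div_pos (by linarith) (by positivity)
  linarith

theorem valSeq_le_of_seqLe (hβ : 1 < β) (hx : ∀ i, x i ≤ B) (hy : ∀ i, y i ≤ B)
    (htail : ∀ n, valSeq β (shiftn n x) ≤ 1) (h : seqLe x y) : valSeq β x ≤ valSeq β y := by
  rcases h with rfl | ⟨n, hn, hn'⟩
  · exact le_rfl
  have h0 : 0 < β := zero_lt_one.trans hβ
  have h1 := le_valSeq_sub_of_lt hβ hx hy hn hn'
  have h2 := htail (n + 1)
  have h3 := valSeq_nonneg hβ (shiftn (n + 1) y)
  have : 0 ≤ (1 + valSeq β (shiftn (n + 1) y) - valSeq β (shiftn (n + 1) x)) / β ^ (n + 1) :=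
    div_nonneg (by linarith) (by positivity)
  linarith

/-- If all shifts of `c` are below a sequence of value at most one, then they have value at
most one. -/
theorem valSeq_shift_le_one (hβ : 1 < β) (hc : ∀ i, c i ≤ B) (hz : ∀ i, z i ≤ B)
    (hle : ∀ n, seqLe (shiftn n c) z) (hval : valSeq β z ≤ 1) (n : ℕ) :
    valSeq β (shiftn n c) ≤ 1 := by
  have h0 : 0 < β := zero_lt_one.trans hβ
  have hbdd : BddAbove (range fun n => valSeq β (shiftn n c)) :=
    ⟨B / (β - 1), by rintro _ ⟨n, rfl⟩; exact valSeq_le hβ fun i => hc _⟩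
  set M := ⨆ n, valSeq β (shiftn n c) with hM
  have hMn : ∀ n, valSeq β (shiftn n c) ≤ M := fun n => le_ciSup hbdd n
  by_contra! hcon
  have hM1 : 1 < M := hcon.trans_le (hMn n)
  have key : M ≤ 1 + (M - 1) / β := by
    refine ciSup_le fun k => ?_
    have hpos : 0 ≤ (M - 1) / β := div_nonneg (by linarith) h0.le
    rcases hle k with h | ⟨j, hj, hj'⟩
    · rw [h]
      linarith
    · have h1 := le_valSeq_sub_of_lt (x := shiftn k c) hβ (fun i => hc _) hz hj hj'
      have h2 : valSeq β (shiftn (j + 1) (shiftn k c)) ≤ M := by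
        rw [shiftn_shiftn]
        exact hMn _
      have h3 := valSeq_nonneg hβ (shiftn (j + 1) z)
      have h4 : (1 - M) / β ^ (j + 1) ≤ (1 + valSeq β (shiftn (j + 1) z) -
          valSeq β (shiftn (j + 1) (shiftn k c))) / β ^ (j + 1) := by
        gcongr
        linarith
      have h5 : (M - 1) / β ^ (j + 1) ≤ (M - 1) / β := by
        have : β ≤ β ^ (j + 1) := le_self_pow₀ hβ.le (by omega)
        have : 0 ≤ M - 1 := by linarith
        gcongr
      have h6 : (1 - M) / β ^ (j + 1) = -((M - 1) / β ^ (j + 1)) := by ring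
      linarith
  have : (M - 1) / β < M - 1 := div_lt_self (by linarith) hβ
  linarith

theorem valSeq_shift_lt_one (hβ : 1 < β) (hc : ∀ i, c i ≤ B) (hz : ∀ i, z i ≤ B)
    (hlt : ∀ n, seqLt (shiftn n c) z) (hval : valSeq β z ≤ 1)
    (htail : ∀ n, 0 < valSeq β (shiftn n z)) (n : ℕ) : valSeq β (shiftn n c) < 1 := by
  have h0 : 0 < β := zero_lt_one.trans hβ
  obtain ⟨j, hj, hj'⟩ := hlt n
  have h1 := le_valSeq_sub_of_lt (x := shiftn n c) hβ (fun i => hc _) hz hj hj'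
  have h2 := valSeq_shift_le_one hβ hc hz (fun k => (hlt k).le) hval (j + 1 + n)
  rw [← shiftn_shiftn] at h2
  have h3 := htail (j + 1)
  have : 0 < (1 + valSeq β (shiftn (j + 1) z) -
      valSeq β (shiftn (j + 1) (shiftn n c))) / β ^ (j + 1) :=
    div_pos (by linarith) (by positivity)
  linarith

/-- A bounded sequence with two nonzero digits has value one in some base. -/
theorem exists_valSeq_eq_one (hc : ∀ i, c i ≤ B) {i j : ℕ} (hij : i < j) (hi : 0 < c i)
    (hj : 0 < c j) : ∃ β : ℝ, 1 < β ∧ valSeq β c = 1 := by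
  obtain ⟨γ, hγ, hpow⟩ : ∃ γ : ℝ, 1 < γ ∧ γ ^ (j + 1) = 2 := by
    refine ⟨2 ^ (((j + 1 : ℕ) : ℝ)⁻¹), Real.one_lt_rpow one_lt_two (by positivity), ?_⟩
    exact Real.rpow_inv_natCast_pow zero_le_two (by omega)
  have h0 : 0 < γ := zero_lt_one.trans hγ
  have hlow : 1 ≤ valSeq γ c := by
    have hsum := (summable_valSeq hγ hc).sum_le_tsum {i, j} fun i _ => by positivity
    rw [Finset.sum_pair hij.ne] at hsum
    have h1 : (1 : ℝ) / 2 ≤ c i / γ ^ (i + 1) := by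
      rw [← hpow]
      have : (1 : ℝ) ≤ c i := by exact_mod_cast hi
      have : γ ^ (i + 1) ≤ γ ^ (j + 1) := pow_le_pow_right₀ hγ.le (by omega)
      gcongr
    have h2 : (1 : ℝ) / 2 ≤ c j / γ ^ (j + 1) := by
      rw [← hpow]
      have : (1 : ℝ) ≤ c j := by exact_mod_cast hj
      gcongr
    rw [valSeq]
    linarith
  set δ : ℝ := max γ (B + 1) with hδ
  have hγδ : γ ≤ δ := le_max_left _ _
  have hhigh : valSeq δ c ≤ 1 := by
    refine (valSeq_le (hγ.trans_le hγδ) hc).trans ?_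
    have : (B : ℝ) + 1 ≤ δ := le_max_right _ _
    rw [div_le_one (by linarith)]
    linarith
  have hcont : ContinuousOn (fun β => valSeq β c) (Icc γ δ) := by
    refine continuousOn_tsum (u := fun i => (B : ℝ) / γ ^ (i + 1)) (fun i => ?_)
      (summable_const_div_pow hγ B) fun i β hβ => ?_
    · refine ContinuousOn.div continuousOn_const (by fun_prop) fun β hβ => ?_
      have : 0 < β := h0.trans_le hβ.1
      positivity
    · have : 0 < β := h0.trans_le hβ.1
      rw [Real.norm_of_nonneg (by positivity)]
      have := hc i
      have := hβ.1
      gcongr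
  obtain ⟨β, hβ, hval⟩ := intermediate_value_Icc' hγδ hcont ⟨hhigh, hlow⟩
  exact ⟨β, hγ.trans_le hβ.1, hval⟩

end ValSeq

/-! ### Countable survivor sets -/

theorem IsLyndonPair.exists_bound {m : ℕ} {a b : ℕ → ℕ} (h : IsLyndonPair m a b) :
    ∃ B, ∀ i, a i ≤ B ∧ b i ≤ B := by
  have ha : ∀ i, a i ≤ ∑ j ∈ Finset.range m, a j := fun i => by
    rw [← h.mod_period]
    exact Finset.single_le_sum_of_canonicallyOrdered (f := a)
      (Finset.mem_range.2 (Nat.mod_lt _ h.pos))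
  obtain ⟨g, rfl⟩ := h.exists_shift
  exact ⟨_, fun i => ⟨ha i, ha _⟩⟩

theorem blockSubst_le {m B : ℕ} {a b : ℕ → ℕ} (hB : ∀ i, a i ≤ B ∧ b i ≤ B) (p : ℕ) {c : ℕ → ℕ}
    (hc : ∀ i, c i ≤ 1) (i : ℕ) : blockSubst m a b p c i ≤ B + 1 := by
  have h1 := hB (i % m)
  have h2 := hc (i / m)
  rw [blockSubst]
  split_ifs <;> omega

section Digits

variable {β x : ℝ}

/-- The greedy β-expansion of `x`. -/
noncomputable def betaDigits (β x : ℝ) (i : ℕ) : ℕ := ⌊β * (Tbeta β)^[i] x⌋₊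

theorem iterate_Tbeta_mem (hx : x ∈ Ico (0 : ℝ) 1) (n : ℕ) :
    (Tbeta β)^[n] x ∈ Ico (0 : ℝ) 1 := by
  cases n with
  | zero => exact hx
  | succ n =>
    rw [Function.iterate_succ_apply']
    exact ⟨Int.fract_nonneg _, Int.fract_lt_one _⟩

theorem betaDigits_le (hβ : 1 < β) (hx : x ∈ Ico (0 : ℝ) 1) (i : ℕ) :
    betaDigits β x i ≤ ⌊β⌋₊ := by
  have h := iterate_Tbeta_mem (β := β) hx i
  exact Nat.floor_le_floor (mul_le_of_le_one_right (by linarith) h.2.le)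

theorem shift_betaDigits (β x : ℝ) (n : ℕ) :
    shiftn n (betaDigits β x) = betaDigits β ((Tbeta β)^[n] x) := by
  funext i
  rw [shiftn, betaDigits, betaDigits, Function.iterate_add_apply]

theorem valSeq_betaDigits (hβ : 1 < β) (hx : x ∈ Ico (0 : ℝ) 1) :
    valSeq β (betaDigits β x) = x := by
  have h0 : 0 < β := zero_lt_one.trans hβ
  have hpartial : ∀ n, ∑ i ∈ Finset.range n, (betaDigits β x i : ℝ) / β ^ (i + 1) =
      x - (Tbeta β)^[n] x / β ^ n := fun n => by
    induction n with
    | zero => simp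
    | succ n ih =>
      have hn := iterate_Tbeta_mem (β := β) hx n
      have hdigit : (betaDigits β x n : ℝ) = β * (Tbeta β)^[n] x - (Tbeta β)^[n + 1] x := by
        rw [Function.iterate_succ_apply', Tbeta, Int.fract, betaDigits,
          natCast_floor_eq_intCast_floor (mul_nonneg h0.le hn.1)]
        ring
      rw [Finset.sum_range_succ, ih, hdigit, pow_succ]
      field_simp
      ring
  have hlim : Tendsto (fun n => x - (Tbeta β)^[n] x / β ^ n) atTop (𝓝 x) := by
    have hzero : Tendsto (fun n => (Tbeta β)^[n] x / β ^ n) atTop (𝓝 0) := by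
      refine squeeze_zero (g := fun n => (β⁻¹) ^ n) (fun n => ?_) (fun n => ?_)
        (tendsto_pow_atTop_nhds_zero_of_lt_one (inv_nonneg.2 h0.le) (inv_lt_one_of_one_lt₀ hβ))
      · exact div_nonneg (iterate_Tbeta_mem hx n).1 (by positivity)
      · rw [inv_pow, ← one_div]
        have := (iterate_Tbeta_mem (β := β) hx n).2
        gcongr
    simpa using tendsto_const_nhds.sub hzero
  have hsum := (summable_valSeq hβ (betaDigits_le hβ hx)).hasSum.tendsto_sum_nat
  simp_rw [hpartial] at hsum
  exact tendsto_nhds_unique hsum hlim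

end Digits

/-- If `f` and `e` enclose only countably many sequences under all shifts, and `e` has value one
in a base at least `β`, then the survivor set with hole `[0, (f)_β)` is countable. -/
theorem countable_survivor {β β' : ℝ} {B : ℕ} {f e : ℕ → ℕ} (hβ : 1 < β) (hββ' : β ≤ β')
    (hf : ∀ i, f i ≤ B) (he : ∀ i, e i ≤ B) (hmax : ∀ n, seqLe (shiftn n e) e)
    (hval : valSeq β' e = 1) (hfe : (seqBetween f e).Countable) :
    (survivor β (valSeq β f)).Countable := by
  have hβ' : 1 < β' := hβ.trans_le hββ'
  refine (hfe.image (valSeq β)).mono ?_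
  rintro x ⟨hx, hsurv⟩
  refine ⟨betaDigits β x, fun n => ?_, valSeq_betaDigits hβ hx⟩
  set D := max B ⌊β⌋₊
  have hfD : ∀ i, f i ≤ D := fun i => (hf i).trans (le_max_left _ _)
  have heD : ∀ i, e i ≤ D := fun i => (he i).trans (le_max_left _ _)
  have hdig : ∀ k i, shiftn k (betaDigits β x) i ≤ D := fun k i =>
    (betaDigits_le hβ hx _).trans (le_max_right _ _)
  have hvaln : ∀ k, valSeq β (shiftn k (betaDigits β x)) = (Tbeta β)^[k] x := fun k => by
    rw [shift_betaDigits, valSeq_betaDigits hβ (iterate_Tbeta_mem hx k)]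
  have hlt : ∀ k, valSeq β (shiftn k (betaDigits β x)) < 1 := fun k => by
    rw [hvaln]
    exact (iterate_Tbeta_mem hx k).2
  refine ⟨seqLe_of_not_lt fun h => ?_, seqLe_of_not_lt fun h => ?_⟩
  · have := valSeq_lt_of_seqLt hβ (hdig n) hfD (fun k => by rw [shiftn_shiftn]; exact hlt _) h
    rw [hvaln] at this
    exact absurd (hsurv n) (not_le.2 this)
  · have h1 := valSeq_le_of_seqLe hβ' heD (hdig n)
      (valSeq_shift_le_one hβ' heD heD hmax hval.le) h.le
    have h2 := valSeq_anti hβ hββ' (hdig n)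
    have h3 := hlt n
    linarith

theorem countable_seqBetween_zero_one_zero :
    (seqBetween (fun _ => 0) (fun i => if i = 0 then 1 else 0)).Countable := by
  refine (countable_singleton (fun _ : ℕ => 0)).tails.mono fun d hd => ?_
  by_cases h : ∃ n, d n ≠ 0
  · obtain ⟨n, hn⟩ := h
    refine ⟨n + 1, funext fun i => ?_⟩
    have hd0 : seqLe (shiftn n d) (fun i => if i = 0 then 1 else 0) := (hd n).2
    have hle := hd0.head_le
    simp only [shiftn, zero_add, if_true] at hle
    rcases hd0 with heq | ⟨k, hk, hk'⟩
    · have := congrFun heq (i + 1)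
      simpa [shiftn, add_assoc, add_comm 1 n] using this
    · rcases Nat.eq_zero_or_pos k with rfl | hk0
      · simp only [shiftn, zero_add, if_true] at hk'
        omega
      · simp [hk0.ne'] at hk'
  · push Not at h
    exact ⟨0, funext fun i => by simpa [shiftn] using h i⟩

theorem IsLyndonPair.countable_survivor {m : ℕ} {a b : ℕ → ℕ} (h : IsLyndonPair m a b)
    (hab : (seqBetween a b).Countable) {β β' : ℝ} (hβ : 1 < β) (hββ' : β ≤ β')
    (hval : valSeq β' (blockSubst m a b 0 (fun i => if i = 0 then 1 else 0)) = 1) :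
    (survivor β (valSeq β (blockSubst m a b 1 fun _ => 0))).Countable := by
  obtain ⟨B, hB⟩ := h.exists_bound
  have hω : ∀ i : ℕ, (if i = 0 then 1 else 0) ≤ 1 := fun i => by split_ifs <;> omega
  have hω' : ∀ n, seqLe (shiftn n fun i => if i = 0 then 1 else 0)
      (fun i => if i = 0 then 1 else 0) := fun n => by
    rcases Nat.eq_zero_or_pos n with rfl | hn
    · exact seqLe.refl _
    · exact .inr ⟨0, by simp, by simp [shiftn, hn.ne']⟩
  refine _root_.countable_survivor (B := B + 1) hβ hββ' (blockSubst_le hB 1 fun _ => zero_le_one)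
    (blockSubst_le hB 0 hω) (fun n => shift_le_blockSubst h zero_le_one hω rfl ?_ n) hval
    (countable_seqBetween_blockSubst h hab hω rfl rfl (seqLe.refl _) (hω' 1)
      countable_seqBetween_zero_one_zero)
  exact fun q _ => hω' q

/-! ### Survivor sets of positive dimension -/

/-- A set of reals containing an exponentially separated family indexed by binary sequences has
positive Hausdorff dimension. -/
theorem dimH_ne_zero_of_separated {K : Set ℝ} {F : (ℕ → Fin 2) → ℝ} (hF : ∀ ε, F ε ∈ K) {c ρ : ℝ}
    (hc : 0 < c) (hρ : 1 < ρ)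
    (hsep : ∀ ε ε' k, (∀ i < k, ε i = ε' i) → ε k ≠ ε' k → c / ρ ^ (k + 1) ≤ |F ε - F ε'|) :
    dimH K ≠ 0 := by
  have hρ0 : 0 < ρ := zero_lt_one.trans hρ
  have hr : 0 < Real.logb ρ 2 := Real.logb_pos hρ one_lt_two
  have hpow : ∀ k : ℕ, (ρ ^ k) ^ Real.logb ρ 2 = (2 : ℝ) ^ k := fun k => by
    rw [← Real.rpow_natCast ρ, ← Real.rpow_mul hρ0.le, mul_comm, Real.rpow_mul hρ0.le,
      Real.rpow_logb hρ0 hρ.ne' zero_lt_two, Real.rpow_natCast]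
  have hbound : ∀ ε ε', |Real.ofDigits ε - Real.ofDigits ε'| ≤
      2 / c ^ Real.logb ρ 2 * |F ε - F ε'| ^ Real.logb ρ 2 := fun ε ε' => by
    classical
    by_cases h : ∃ k, ε k ≠ ε' k
    · have hlt : ∀ i < Nat.find h, ε i = ε' i := fun i hi => not_not.1 (Nat.find_min h hi)
      have h1 := hsep ε ε' _ hlt (Nat.find_spec h)
      have h2 := Real.abs_ofDigits_sub_ofDigits_le hlt
      generalize Nat.find h = k at *
      have h3 := Real.rpow_le_rpow (by positivity) h1 hr.le
      rw [Real.div_rpow hc.le (by positivity), hpow] at h3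
      have h4 : (0 : ℝ) < c ^ Real.logb ρ 2 := Real.rpow_pos_of_pos hc _
      refine h2.trans ?_
      calc (((2 : ℕ) : ℝ) ^ k)⁻¹ = 2 / c ^ Real.logb ρ 2 * (c ^ Real.logb ρ 2 / 2 ^ (k + 1)) := by
            push_cast
            rw [pow_succ]
            field_simp
        _ ≤ _ := by gcongr
    · push Not at h
      rw [funext h, sub_self, abs_zero]
      positivity
  have hinj : Function.Injective F := fun ε ε' h => by
    classical
    by_contra hne
    have hex := Function.ne_iff.1 hne
    have h1 := hsep ε ε' _ (fun i hi => not_not.1 (Nat.find_min hex hi)) (Nat.find_spec hex)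
    rw [h, sub_self, abs_zero] at h1
    exact absurd h1 (not_le.2 (by positivity))
  set φ : ℝ → ℝ := fun x => Real.ofDigits (Function.invFun F x) with hφ
  have hφF : ∀ ε, φ (F ε) = Real.ofDigits ε := fun ε => by
    rw [hφ]
    simp only [Function.leftInverse_invFun hinj ε]
  have hC : (0 : ℝ) ≤ 2 / c ^ Real.logb ρ 2 := by positivity
  have hholder : HolderOnWith (2 / c ^ Real.logb ρ 2).toNNReal (Real.logb ρ 2).toNNReal φ
      (range F) := by
    rintro _ ⟨ε, rfl⟩ _ ⟨ε', rfl⟩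
    rw [hφF, hφF, edist_dist, edist_dist, Real.dist_eq, Real.dist_eq, Real.coe_toNNReal _ hr.le,
      ENNReal.ofReal_rpow_of_nonneg (abs_nonneg _) hr.le, ← ENNReal.ofReal.eq_1,
      ← ENNReal.ofReal_mul hC]
    exact ENNReal.ofReal_le_ofReal (hbound ε ε')
  intro hK
  have hrange : dimH (range F) = 0 :=
    le_antisymm (hK ▸ dimH_mono (range_subset_iff.2 hF)) zero_le
  have himage : Icc (0 : ℝ) 1 ⊆ Set.image φ (range F) := fun y hy => by
    obtain ⟨ε, -, rfl⟩ := Real.ofDigits_SurjOn one_lt_two hy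
    exact ⟨F ε, mem_range_self ε, hφF ε⟩
  have hinterior : (interior (Icc (0 : ℝ) 1)).Nonempty := by simp [interior_Icc]
  have hone : dimH (Icc (0 : ℝ) 1) = 1 := by simpa using Real.dimH_of_nonempty_interior hinterior
  have hle := (dimH_mono himage).trans (hholder.dimH_image_le (Real.toNNReal_pos.2 hr))
  rw [hone, hrange, ENNReal.zero_div] at hle
  exact absurd hle (by simp)

/-- The sequence `s⁻ L(s)^∞`, where `a = s^∞` and `b = L(s)^∞`. -/
def lowerSeq (m : ℕ) (a b : ℕ → ℕ) : ℕ → ℕ := blockSubst m a b 1 fun _ => 0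

namespace IsLyndonPair

variable {m : ℕ} {a b : ℕ → ℕ}

theorem exists_right_pos (h : IsLyndonPair m a b) (n : ℕ) : ∃ i, 0 < b (i + n) := by
  obtain ⟨g, hg⟩ := h.exists_shift
  have hm := h.pos
  have hle : n + g ≤ m * (n + g) := Nat.le_mul_of_pos_left _ hm
  refine ⟨m - 1 + (m * (n + g) - (n + g)), ?_⟩
  rw [hg, shiftn, show m - 1 + (m * (n + g) - (n + g)) + n + g = m - 1 + m * (n + g) by omega,
    h.periodic_mul]
  exact h.last

theorem lowerSeq_of_lt {i : ℕ} (hi : i + 1 < m) : lowerSeq m a b i = a i := by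
  rw [lowerSeq, blockSubst_of_lt _ _ hi, if_neg one_ne_zero]

theorem lowerSeq_last_lt (h : IsLyndonPair m a b) : lowerSeq m a b (m - 1) < a (m - 1) := by
  have := h.last
  rw [lowerSeq, blockSubst_last h.pos, if_neg one_ne_zero]
  omega

theorem lowerSeq_add (h : IsLyndonPair m a b) (i : ℕ) : lowerSeq m a b (i + m) = b i := by
  rw [lowerSeq, blockSubst_add h.pos]
  exact congrFun (blockSubst_const_zero h) i

theorem shift_lowerSeq_le (h : IsLyndonPair m a b) (n : ℕ) :
    seqLe (shiftn n (lowerSeq m a b)) b := by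
  rcases lt_or_ge n m with hn | hn
  · have hlt : seqLt (shiftn n (lowerSeq m a b)) (shiftn n a) := by
      refine ⟨m - 1 - n, fun i hi => lowerSeq_of_lt (by omega), ?_⟩
      simp only [shiftn]
      rw [show m - 1 - n + n = m - 1 by omega]
      exact h.lowerSeq_last_lt
    exact (hlt.trans_le (h.shift_le_right n)).le
  · have heq : shiftn n (lowerSeq m a b) = shiftn (n - m) b := by
      funext i
      simp only [shiftn]
      rw [← h.lowerSeq_add, add_assoc, Nat.sub_add_cancel hn]
    rw [heq]
    exact h.max _

/-- `s⁻ L(s)^∞` is strictly below its first `m - 1` shifts, with a uniform bound on the position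
of the first difference. -/
theorem exists_lowerSeq_lt_shift (h : IsLyndonPair m a b) :
    ∃ R, ∀ j, 0 < j → j < m → ∃ k ≤ R,
      (∀ i < k, lowerSeq m a b i = lowerSeq m a b (i + j)) ∧
        lowerSeq m a b k < lowerSeq m a b (k + j) := by
  have hlt : ∀ j : ℕ, ∃ k, 0 < j → j < m →
      (∀ i < k, lowerSeq m a b i = lowerSeq m a b (i + j)) ∧
        lowerSeq m a b k < lowerSeq m a b (k + j) := fun j => by
    by_cases hj : 0 < j ∧ j < m
    · obtain ⟨k, hk⟩ := blockSubst_lt_shift h le_rfl (c := fun _ => 0) zero_le_one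
        (c' := fun _ => 0) rfl hj.1 hj.2
      exact ⟨k, fun _ _ => hk⟩
    · exact ⟨0, fun h1 h2 => absurd ⟨h1, h2⟩ hj⟩
  choose k hk using hlt
  exact ⟨(Finset.range m).sup k, fun j hj hjm =>
    ⟨k j, Finset.le_sup (Finset.mem_range.2 hjm), hk j hj hjm⟩⟩

/-- At arbitrarily large positions `s⁻ L(s)^∞` continues as `s^∞`. -/
theorem exists_lowerSeq_return (h : IsLyndonPair m a b) (R : ℕ) :
    ∃ l ≥ R, ∀ i, lowerSeq m a b (i + l) = a i := by
  obtain ⟨g, hg⟩ := h.exists_shift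
  have hle : g + R ≤ m * (g + R) := Nat.le_mul_of_pos_left _ h.pos
  refine ⟨m * (g + R) - g + m, by omega, fun i => ?_⟩
  rw [← add_assoc, h.lowerSeq_add, hg, shiftn, add_assoc, Nat.sub_add_cancel (by omega),
    h.periodic_mul]

end IsLyndonPair

/-- `d` is a concatenation of prefixes of `f` with lengths in `G`, all of length at least `l`. -/
def IsPrefixConcat (f : ℕ → ℕ) (G : Set ℕ) (l : ℕ) (d : ℕ → ℕ) : Prop :=
  ∀ n, ∃ s, ∃ L ∈ G, s ≤ n ∧ n < s + L ∧ (∀ i < L, d (i + s) = f i) ∧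
    ∀ i < l, d (i + L + s) = f i

namespace IsPrefixConcat

variable {m l : ℕ} {a b d : ℕ → ℕ} {G : Set ℕ}

/-- Past the end of a block, `d` keeps agreeing with `s⁻ L(s)^∞` for `m - 1` digits and then
drops below it. -/
theorem agree (hG : ∀ L ∈ G, l ≤ L ∧ ∀ i, lowerSeq m a b (i + L) = a i)
    (hl : m ≤ l) {s L : ℕ} (hL : L ∈ G) (h1 : ∀ i < L, d (i + s) = lowerSeq m a b i)
    (h2 : ∀ i < l, d (i + L + s) = lowerSeq m a b i) {i : ℕ} (hi : i + 1 < L + m) :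
    d (i + s) = lowerSeq m a b i := by
  rcases lt_or_ge i L with hiL | hiL
  · exact h1 i hiL
  · obtain ⟨k, rfl⟩ : ∃ k, i = k + L := ⟨i - L, by omega⟩
    rw [h2 k (by omega), (hG L hL).2, IsLyndonPair.lowerSeq_of_lt (by omega)]

theorem shift_lt (h : IsLyndonPair m a b) (hd : IsPrefixConcat (lowerSeq m a b) G l d)
    (hG : ∀ L ∈ G, l ≤ L ∧ ∀ i, lowerSeq m a b (i + L) = a i) (hl : m ≤ l) (n : ℕ) :
    seqLt (shiftn n d) b := by
  obtain ⟨s, L, hL, hsn, hnL, h1, h2⟩ := hd n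
  have hm := h.pos
  obtain ⟨j, rfl⟩ : ∃ j, n = j + s := ⟨n - s, by omega⟩
  refine (h.shift_lowerSeq_le j).lt_of_perturb (L - j + (m - 1)) (fun i hi => ?_) (fun _ _ => rfl)
    fun hle => lt_of_lt_of_le ?_ hle
  · simp only [shiftn]
    rw [← add_assoc, agree hG hl hL h1 h2 (by omega)]
  · simp only [shiftn]
    rw [show L - j + (m - 1) + (j + s) = m - 1 + L + s by omega, h2 _ (by omega),
      show L - j + (m - 1) + j = m - 1 + L by omega, (hG L hL).2]
    exact h.lowerSeq_last_lt

/-- A shift of `d` either is strictly above `s⁻ L(s)^∞` or agrees with it for `l` digits. -/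
theorem lt_shift (h : IsLyndonPair m a b) (hd : IsPrefixConcat (lowerSeq m a b) G l d)
    (hG : ∀ L ∈ G, l ≤ L ∧ ∀ i, lowerSeq m a b (i + L) = a i) {R : ℕ}
    (hR : ∀ j, 0 < j → j < m → ∃ k ≤ R,
      (∀ i < k, lowerSeq m a b i = lowerSeq m a b (i + j)) ∧
        lowerSeq m a b k < lowerSeq m a b (k + j)) (hl : R + m ≤ l) (n : ℕ) :
    seqLt (lowerSeq m a b) (shiftn n d) ∨ ∀ i < l, lowerSeq m a b i = shiftn n d i := by
  obtain ⟨s, L, hL, hsn, hnL, h1, h2⟩ := hd n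
  have hm := h.pos
  have hlL := (hG L hL).1
  obtain ⟨j, rfl⟩ : ∃ j, n = j + s := ⟨n - s, by omega⟩
  have hagree : ∀ i, i + j + 1 < L + m → shiftn (j + s) d i = lowerSeq m a b (i + j) :=
    fun i hi => by
      simp only [shiftn]
      rw [← add_assoc, agree hG (by omega) hL h1 h2 hi]
  rcases Nat.eq_zero_or_pos j with rfl | hj
  · exact .inr fun i hi => (hagree i (by omega)).symm
  left
  rcases lt_or_ge j m with hjm | hjm
  · obtain ⟨k, hkR, hk, hk'⟩ := hR j hj hjm
    refine ⟨k, fun i hi => ?_, ?_⟩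
    · rw [hagree i (by omega), hk i hi]
    · rwa [hagree k (by omega)]
  · have hb : ∀ i, i < m → shiftn (j + s) d i = shiftn (j - m) b i := fun i hi => by
      rw [hagree i (by omega), shiftn, ← h.lowerSeq_add, add_assoc, Nat.sub_add_cancel hjm]
    refine (h.le_shift_right (j - m)).lt_of_perturb (m - 1)
      (fun i hi => IsLyndonPair.lowerSeq_of_lt (by omega)) (fun i hi => hb i (by omega))
      fun hle => ?_
    rw [hb _ (by omega)]
    exact h.lowerSeq_last_lt.trans_le hle

end IsPrefixConcat

/-- The concatenation of prefixes of `f` in which the `q`-th pair of prefixes has lengths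
`l, l'` or `l', l` according to the `q`-th bit. -/
def twoBlockSeq (f : ℕ → ℕ) (l l' : ℕ) (ε : ℕ → Fin 2) (i : ℕ) : ℕ :=
  if i % (l + l') < (if ε (i / (l + l')) = 0 then l else l') then f (i % (l + l'))
  else f (i % (l + l') - if ε (i / (l + l')) = 0 then l else l')

section TwoBlock

variable {f : ℕ → ℕ} {l l' : ℕ} {ε ε' : ℕ → Fin 2}

theorem twoBlockSeq_apply (q : ℕ) {r : ℕ} (hr : r < l + l') :
    twoBlockSeq f l l' ε (r + (l + l') * q) =
      if r < (if ε q = 0 then l else l') then f r else f (r - if ε q = 0 then l else l') := by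
  have h1 : (r + (l + l') * q) % (l + l') = r := by
    rw [Nat.add_mul_mod_self_left, Nat.mod_eq_of_lt hr]
  have h2 : (r + (l + l') * q) / (l + l') = q := by
    rw [Nat.add_mul_div_left _ _ (by omega), Nat.div_eq_of_lt hr, zero_add]
  rw [twoBlockSeq, h1, h2]

theorem isPrefixConcat_twoBlockSeq (hl : 0 < l) (hll' : l ≤ l') (ε : ℕ → Fin 2) :
    IsPrefixConcat f {l, l'} l (twoBlockSeq f l l' ε) := by
  intro n
  have hM : 0 < l + l' := by omega
  have hr : n % (l + l') < l + l' := Nat.mod_lt _ hM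
  have hn : n % (l + l') + (l + l') * (n / (l + l')) = n := Nat.mod_add_div n (l + l')
  generalize n % (l + l') = r at *
  generalize n / (l + l') = q at *
  obtain ⟨s, s', hs, hss', hmem, hmem', hls'⟩ : ∃ s s', (if ε q = 0 then l else l') = s ∧
      s + s' = l + l' ∧ s ∈ ({l, l'} : Set ℕ) ∧ s' ∈ ({l, l'} : Set ℕ) ∧ l ≤ s' := by
    split_ifs
    · exact ⟨l, l', rfl, rfl, by simp, by simp, hll'⟩
    · exact ⟨l', l, rfl, add_comm _ _, by simp, by simp, le_rfl⟩
  have happ : ∀ i < l + l', twoBlockSeq f l l' ε (i + (l + l') * q) =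
      if i < s then f i else f (i - s) := fun i hi => by rw [twoBlockSeq_apply q hi, hs]
  rcases lt_or_ge r s with hrs | hrs
  · refine ⟨(l + l') * q, s, hmem, by omega, by omega, fun i hi => ?_, fun i hi => ?_⟩
    · rw [happ i (by omega), if_pos hi]
    · rw [happ (i + s) (by omega), if_neg (by omega), Nat.add_sub_cancel]
  · refine ⟨s + (l + l') * q, s', hmem', by omega, by omega, fun i hi => ?_, fun i hi => ?_⟩
    · rw [← add_assoc, happ (i + s) (by omega), if_neg (by omega), Nat.add_sub_cancel]
    · rw [show i + s' + (s + (l + l') * q) = i + (l + l') * (q + 1) by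
        rw [Nat.mul_succ]; omega, twoBlockSeq_apply _ (by omega), if_pos (by split_ifs <;> omega)]

/-- Two-block concatenations are ordered by the first differing bit. -/
theorem twoBlockSeq_lt_of_bit {m k : ℕ} {a b : ℕ → ℕ} (h : IsLyndonPair m a b)
    (hret : ∀ i, lowerSeq m a b (i + l) = a i) (hl : m ≤ l)
    (hk : ∀ i < k, ε i = ε' i) (h0 : ε k = 0) (h1 : ε' k = 1) :
    (∀ i < m - 1 + l + (l + (l + m)) * k, twoBlockSeq (lowerSeq m a b) l (l + m) ε i =
      twoBlockSeq (lowerSeq m a b) l (l + m) ε' i) ∧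
    twoBlockSeq (lowerSeq m a b) l (l + m) ε (m - 1 + l + (l + (l + m)) * k) <
      twoBlockSeq (lowerSeq m a b) l (l + m) ε' (m - 1 + l + (l + (l + m)) * k) := by
  have hm := h.pos
  refine ⟨fun i hi => ?_, ?_⟩
  · have hr : i % (l + (l + m)) < l + (l + m) := Nat.mod_lt _ (by omega)
    have hi' := Nat.mod_add_div i (l + (l + m))
    generalize i % (l + (l + m)) = r at *
    generalize i / (l + (l + m)) = q at *
    have hqk : q ≤ k := by
      by_contra! hkq
      have : (l + (l + m)) * (k + 1) ≤ (l + (l + m)) * q := Nat.mul_le_mul_left _ hkq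
      rw [Nat.mul_succ] at this
      omega
    rw [← hi', twoBlockSeq_apply q hr, twoBlockSeq_apply q hr]
    rcases hqk.eq_or_lt with rfl | hlt
    · simp only [h0, h1, if_true, one_ne_zero, if_false]
      rcases lt_or_ge r l with hrl | hrl
      · rw [if_pos hrl, if_pos (by omega)]
      · obtain ⟨r, rfl⟩ : ∃ r', r = r' + l := ⟨r - l, by omega⟩
        rw [if_neg (by omega), if_pos (by omega), hret, Nat.add_sub_cancel,
          IsLyndonPair.lowerSeq_of_lt (by omega)]
    · rw [hk q hlt]
  · rw [twoBlockSeq_apply k (by omega), twoBlockSeq_apply k (by omega)]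
    simp only [h0, h1, if_true, one_ne_zero, if_false]
    rw [if_neg (by omega), if_pos (by omega), hret, Nat.add_sub_cancel]
    exact h.lowerSeq_last_lt

end TwoBlock

theorem iterate_Tbeta_valSeq {β : ℝ} {B : ℕ} {c : ℕ → ℕ} (hβ : 1 < β) (hc : ∀ i, c i ≤ B)
    (hlt : ∀ n, valSeq β (shiftn n c) < 1) (n : ℕ) :
    (Tbeta β)^[n] (valSeq β c) = valSeq β (shiftn n c) := by
  induction n with
  | zero => rfl
  | succ n ih =>
    rw [Function.iterate_succ_apply', ih, Tbeta,
      valSeq_eq_head_add (c := shiftn n c) hβ fun i => hc _, shiftn_shiftn, add_comm 1 n,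
      Int.fract_natCast_add]
    exact Int.fract_eq_self.2 ⟨valSeq_nonneg hβ _, hlt _⟩

theorem IsLyndonPair.dimH_survivor_ne_zero {m : ℕ} {a b : ℕ → ℕ} (h : IsLyndonPair m a b)
    {β t : ℝ} (hβ : 1 < β) (hb : valSeq β b ≤ 1) (ht : 0 < t)
    (htf : t < valSeq β (lowerSeq m a b)) : dimH (survivor β t) ≠ 0 := by
  have h0 : 0 < β := zero_lt_one.trans hβ
  have hm := h.pos
  obtain ⟨B, hB⟩ := h.exists_bound
  set f := lowerSeq m a b with hf
  have hfB : ∀ i, f i ≤ B + 1 := blockSubst_le hB 1 fun _ => zero_le_one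
  have hbB : ∀ i, b i ≤ B + 1 := fun i => (hB i).2.trans (Nat.le_succ B)
  have htail : ∀ n, valSeq β (shiftn n f) ≤ 1 :=
    valSeq_shift_le_one hβ hfB hbB h.shift_lowerSeq_le hb
  have hbpos : ∀ n, 0 < valSeq β (shiftn n b) := fun n => by
    obtain ⟨i, hi⟩ := h.exists_right_pos n
    exact valSeq_pos hβ (fun i => hbB _) hi
  obtain ⟨R, hR⟩ := h.exists_lowerSeq_lt_shift
  obtain ⟨N, hN⟩ := exists_pow_lt_of_lt_one (sub_pos.2 htf) (inv_lt_one_of_one_lt₀ hβ)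
  obtain ⟨l, hl, hret⟩ := h.exists_lowerSeq_return (R + m + N)
  have hG : ∀ L ∈ ({l, l + m} : Set ℕ), l ≤ L ∧ ∀ i, lowerSeq m a b (i + L) = a i := by
    rintro L (rfl | rfl)
    · exact ⟨le_rfl, hret⟩
    · refine ⟨by omega, fun i => ?_⟩
      rw [add_comm l m, ← add_assoc, hret, h.periodic]
  have hconcat : ∀ ε, IsPrefixConcat f {l, l + m} l (twoBlockSeq f l (l + m) ε) := fun ε =>
    isPrefixConcat_twoBlockSeq (by omega) (by omega) ε
  have hdB : ∀ ε i, twoBlockSeq f l (l + m) ε i ≤ B + 1 := fun ε i => by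
    rw [twoBlockSeq]
    split_ifs <;> exact hfB _
  have hlt : ∀ ε n, valSeq β (shiftn n (twoBlockSeq f l (l + m) ε)) < 1 := fun ε =>
    valSeq_shift_lt_one hβ (hdB ε) hbB ((hconcat ε).shift_lt h hG (by omega)) hb hbpos
  have hge : ∀ ε n, t ≤ valSeq β (shiftn n (twoBlockSeq f l (l + m) ε)) := fun ε n => by
    rcases (hconcat ε).lt_shift h hG hR (by omega) n with h1 | h1
    · exact htf.le.trans (valSeq_le_of_seqLe hβ hfB (fun i => hdB ε _) htail h1.le)
    · have h2 := valSeq_sub_valSeq (y := shiftn n (twoBlockSeq f l (l + m) ε)) hβ hfB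
        (fun i => hdB ε _) h1
      have h3 : (valSeq β (shiftn l f) -
          valSeq β (shiftn l (shiftn n (twoBlockSeq f l (l + m) ε)))) / β ^ l ≤ 1 / β ^ N := by
        have h4 := htail l
        have h5 := valSeq_nonneg hβ (shiftn l (shiftn n (twoBlockSeq f l (l + m) ε)))
        have h6 : β ^ N ≤ β ^ l := pow_le_pow_right₀ hβ.le (by omega)
        have h7 : (0 : ℝ) < β ^ N := by positivity
        exact div_le_div₀ zero_le_one (by linarith) h7 h6
      rw [inv_pow, ← one_div] at hN
      linarith
  have hsep : ∀ ε ε' : ℕ → Fin 2, ∀ k, (∀ i < k, ε i = ε' i) → ε k = 0 → ε' k = 1 →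
      t / (β ^ (l + (l + m))) ^ (k + 1) ≤
        valSeq β (twoBlockSeq f l (l + m) ε') - valSeq β (twoBlockSeq f l (l + m) ε) := by
    intro ε ε' k hk h1 h2
    obtain ⟨h3, h4⟩ := twoBlockSeq_lt_of_bit h hret (by omega) hk h1 h2
    refine le_trans ?_ (le_valSeq_sub_of_lt hβ (hdB ε) (hdB ε') h3 h4)
    have h5 := hlt ε (m - 1 + l + (l + (l + m)) * k + 1)
    have h6 := hge ε' (m - 1 + l + (l + (l + m)) * k + 1)
    refine div_le_div₀ (by linarith) (by linarith) (by positivity) ?_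
    rw [← pow_mul]
    refine pow_le_pow_right₀ hβ.le ?_
    rw [Nat.mul_succ]
    omega
  refine dimH_ne_zero_of_separated (F := fun ε => valSeq β (twoBlockSeq f l (l + m) ε))
    (fun ε => ⟨⟨valSeq_nonneg hβ _, hlt ε 0⟩, fun n => ?_⟩) ht
    (one_lt_pow₀ hβ (by omega : l + (l + m) ≠ 0)) fun ε ε' k hk hne => ?_
  · rw [iterate_Tbeta_valSeq hβ (hdB ε) (hlt ε)]
    exact hge ε n
  · have hcases : (ε k = 0 ∧ ε' k = 1) ∨ (ε k = 1 ∧ ε' k = 0) := by omega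
    rcases hcases with ⟨h1, h2⟩ | ⟨h1, h2⟩
    · rw [abs_sub_comm]
      exact (hsep ε ε' k hk h1 h2).trans (le_abs_self _)
    · exact (hsep ε' ε k (fun i hi => (hk i hi).symm) h2 h1).trans (le_abs_self _)

theorem betaL_spec {S : List ℕ} {b : ℕ → ℕ} (h : IsLyndonPair S.length (perSeq S) b) :
    1 < betaL S ∧ valSeq (betaL S) b = 1 := by
  obtain ⟨B, hB⟩ := h.exists_bound
  obtain ⟨i, hi⟩ := h.exists_right_pos 0
  obtain ⟨j, hj⟩ := h.exists_right_pos (i + 1)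
  have hex := exists_valSeq_eq_one (fun i => (hB i).2) (by omega : i + 0 < j + (i + 1)) hi hj
  rw [← h.perSeq_maxCyc] at hex ⊢
  exact Classical.epsilon_spec hex

theorem betaStar_spec {S : List ℕ} {b : ℕ → ℕ} (h : IsLyndonPair S.length (perSeq S) b) :
    1 < betaStar S ∧ valSeq (betaStar S)
      (blockSubst S.length (perSeq S) b 0 fun i => if i = 0 then 1 else 0) = 1 := by
  obtain ⟨B, hB⟩ := h.exists_bound
  obtain ⟨j, hj⟩ := h.exists_right_pos 0
  have hm := h.pos
  have hfst : 0 < blockSubst S.length (perSeq S) b 0 (fun i => if i = 0 then 1 else 0)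
      (S.length - 1) := by
    rw [blockSubst_last hm]
    simp
  have hsnd : 0 < blockSubst S.length (perSeq S) b 0 (fun i => if i = 0 then 1 else 0)
      (j + S.length + S.length) := by
    rw [blockSubst_add hm]
    exact hj.trans_eq (h.lowerSeq_add j).symm
  have hex := exists_valSeq_eq_one (blockSubst_le hB 0 fun i => by split_ifs <;> omega)
    (by omega) hfst hsnd
  rw [← h.wordSeq_wplus_wminus] at hex ⊢
  exact Classical.epsilon_spec hex

/-- For every `S ∈ Λ_e` and every `β` in the basic interval
`I^S = [β_ℓ^S, β_*^S]`, the critical value is `τ(β) = (S⁻ L(S)^∞)_β`. -/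
theorem tau_on_basic_interval (S : List ℕ) (hS : S ∈ LambdaExt) (β : ℝ) (hβ : β ∈ Iint S) :
    tau β = valSeq β (wordSeq (wminus S) (perSeq (maxCyc S))) := by
  obtain ⟨b, h, hab⟩ := isBalancedWord_of_mem_lambdaExt hS
  obtain ⟨B, hB⟩ := h.exists_bound
  obtain ⟨hL, hLval⟩ := betaL_spec h
  have hβ1 : 1 < β := hL.trans_le hβ.1
  have hb : valSeq β b ≤ 1 := hLval ▸ valSeq_anti hL hβ.1 fun i => (hB i).2
  rw [h.wordSeq_wminus]
  refine IsLeast.csInf_eq ⟨⟨?_, ?_⟩, fun t ht => ?_⟩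
  · obtain ⟨i, hi⟩ := h.exists_right_pos 0
    exact valSeq_pos hβ1 (blockSubst_le hB 1 fun _ => zero_le_one)
      (i := i + S.length) (hi.trans_eq (h.lowerSeq_add i).symm)
  · exact dimH_countable (h.countable_survivor hab hβ1 hβ.2 (betaStar_spec h).2)
  · by_contra! hlt
    exact h.dimH_survivor_ne_zero hβ1 hb ht.1 hlt ht.2
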